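/- Let E be a smooth manifold with a smooth action of a compact connected Lie group G, let N be a closed normal subgroup of G acting freely on E, and set Q = G/N. Then the Weil-model G-equivariant cohomology of E is isomorphic to the Weil-model Q-equivariant cohomology of the quotient: WH^*_G(E) ≅ WH^*_Q(E/N). -/

import Mathlib

/-!
Common algebraic framework (following H. Cartan, and Guillemin–Sternberg):
*operations* of a Lie algebra on a ℤ-graded supercommutative algebra.

For a **compact connected** Lie group `G`, a smooth `G`-action on a graded algebra is
determined infinitesimally, invariance under `G` coincides with infinitesimal invariance
(kernel of the Lie derivative), and `G`-equivariance of maps coincides with infinitesimal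
equivariance.  Accordingly the smooth `G`-action is encoded by its infinitesimal Lie
derivative `L` below; topological (Fréchet) requirements, which play no role in the
statements, are omitted.
-/

open scoped TensorProduct

set_option synthInstance.maxHeartbeats 1000000
set_option maxHeartbeats 1600000

noncomputable section

/-- The sign `(-1)^n` for an integer `n`. -/
def sgn (n : ℤ) : ℤ := if Even n then 1 else -1

/-- An *operation* of a real Lie algebra `𝔤` on a `ℤ`-graded supercommutative real
algebra `A`: a degree `+1` odd derivation `d` with `d² = 0`, an (infinitesimal) action
`L` of `𝔤` by even degree-`0` derivations commuting with `d`, and an equivariant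
contraction `I` by odd degree-`(-1)` derivations satisfying anticommutation,
`[L_X, I_Y] = I_[X,Y]` and Cartan's formula `I_X d + d I_X = L_X`. -/
structure Operation (𝔤 : Type) [LieRing 𝔤] [LieAlgebra ℝ 𝔤]
    (A : Type) [Ring A] [Algebra ℝ A] : Type where
  grading : ℤ → Submodule ℝ A
  decomposition : DirectSum.Decomposition grading
  one_mem : (1 : A) ∈ grading 0
  mul_mem : ∀ {m n : ℤ} {a b : A}, a ∈ grading m → b ∈ grading n → a * b ∈ grading (m + n)
  supercomm : ∀ {m n : ℤ} {a b : A}, a ∈ grading m → b ∈ grading n →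
      a * b = sgn (m * n) • (b * a)
  d : Module.End ℝ A
  d_mem : ∀ {n : ℤ} {a : A}, a ∈ grading n → d a ∈ grading (n + 1)
  d_mul : ∀ {n : ℤ} {a : A}, a ∈ grading n → ∀ b : A,
      d (a * b) = d a * b + sgn n • (a * d b)
  d_sq : d ∘ₗ d = 0
  L : 𝔤 →ₗ[ℝ] Module.End ℝ A
  L_mem : ∀ (X : 𝔤) {n : ℤ} {a : A}, a ∈ grading n → L X a ∈ grading n
  L_mul : ∀ (X : 𝔤) (a b : A), L X (a * b) = L X a * b + a * L X b
  L_bracket : ∀ X Y : 𝔤, L ⁅X, Y⁆ = L X ∘ₗ L Y - L Y ∘ₗ L X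
  L_d : ∀ X : 𝔤, L X ∘ₗ d = d ∘ₗ L X
  I : 𝔤 →ₗ[ℝ] Module.End ℝ A
  I_mem : ∀ (X : 𝔤) {n : ℤ} {a : A}, a ∈ grading n → I X a ∈ grading (n - 1)
  I_mul : ∀ (X : 𝔤) {n : ℤ} {a : A}, a ∈ grading n → ∀ b : A,
      I X (a * b) = I X a * b + sgn n • (a * I X b)
  I_I : ∀ X Y : 𝔤, I X ∘ₗ I Y + I Y ∘ₗ I X = 0
  L_I : ∀ X Y : 𝔤, L X ∘ₗ I Y - I Y ∘ₗ L X = I ⁅X, Y⁆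
  cartan : ∀ X : 𝔤, I X ∘ₗ d + d ∘ₗ I X = L X

namespace Operation

variable {𝔤 : Type} [LieRing 𝔤] [LieAlgebra ℝ 𝔤] {A : Type} [Ring A] [Algebra ℝ A]

/-- Invariant elements (`= G`-invariant elements, for `G` compact connected). -/
def inv (op : Operation 𝔤 A) : Submodule ℝ A := ⨅ X : 𝔤, LinearMap.ker (op.L X)

/-- Horizontal elements. -/
def hor (op : Operation 𝔤 A) : Submodule ℝ A := ⨅ X : 𝔤, LinearMap.ker (op.I X)

/-- Basic elements. -/
def bas (op : Operation 𝔤 A) : Submodule ℝ A := op.inv ⊓ op.hor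

end Operation

/-- `n`-cocycles of the complex obtained by restricting `d` to the graded pieces `P n`. -/
def cocycles {A : Type} [AddCommGroup A] [Module ℝ A] (d : Module.End ℝ A)
    (P : ℤ → Submodule ℝ A) (n : ℤ) : Submodule ℝ A :=
  P n ⊓ LinearMap.ker d

/-- Degree-`n` cohomology of the subcomplex `P` (with differential `d`):
cocycles in `P n` modulo `d (P (n-1))`. -/
abbrev gradedCoh {A : Type} [AddCommGroup A] [Module ℝ A] (d : Module.End ℝ A)
    (P : ℤ → Submodule ℝ A) (n : ℤ) :=
  ↥(cocycles d P n) ⧸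
    Submodule.comap (cocycles d P n).subtype (Submodule.map d (P (n - 1)))

/-- Structure constants `C^i_{jk}` of `𝔤`: `⁅e_j, e_k⁆ = C^i_{jk} e_i`. -/
def structConst {ι 𝔤 : Type} [Fintype ι] [LieRing 𝔤] [LieAlgebra ℝ 𝔤]
    (b : Module.Basis ι ℝ 𝔤) (i j k : ι) : ℝ :=
  b.repr ⁅b j, b k⁆ i

/-- The Weil algebra `W_𝔤 = S𝔤* ⊗ Λ𝔤*` of `𝔤`, presented axiomatically: an operation `W`
together with generators `θ^i` (degree 1) and `Ω^i` (degree 2) on which `d_W`, `L`, `I`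
take the classical values, and such that the monomials `Ω^m · θ^S` form a basis
(this pins `W` down as `S𝔤* ⊗ Λ𝔤*`). -/
structure WeilData (ι : Type) [Fintype ι] [DecidableEq ι] [LinearOrder ι]
    {𝔤 : Type} [LieRing 𝔤] [LieAlgebra ℝ 𝔤] (b : Module.Basis ι ℝ 𝔤)
    (W : Type) [Ring W] [Algebra ℝ W] extends Operation 𝔤 W where
  θ : ι → W
  Ω : ι → W
  θ_mem : ∀ i, θ i ∈ grading 1
  Ω_mem : ∀ i, Ω i ∈ grading 2
  d_θ : ∀ i, d (θ i) =
      (-(1/2 : ℝ)) • ∑ j, ∑ k, structConst b i j k • (θ j * θ k) + Ω i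
  d_Ω : ∀ i, d (Ω i) = -∑ j, ∑ k, structConst b i j k • (θ j * Ω k)
  L_θ : ∀ i j, L (b i) (θ j) = -∑ k, structConst b j i k • θ k
  L_Ω : ∀ i j, L (b i) (Ω j) = -∑ k, structConst b j i k • Ω k
  I_θ : ∀ i j, I (b i) (θ j) = if i = j then 1 else 0
  I_Ω : ∀ i j, I (b i) (Ω j) = 0
  free : ∃ w : Module.Basis ((ι →₀ ℕ) × Finset ι) ℝ W, ∀ p : (ι →₀ ℕ) × Finset ι,
      w p = ((Finset.univ.sort (· ≤ ·)).map fun i => Ω i ^ p.1 i).prod *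
        ((p.2.sort (· ≤ ·)).map θ).prod

/-- An algebraic connection on an operation, in the coordinates given by the basis `b`:
elements `θ̃^i` of degree 1 with `I_j θ̃^k = δ^k_j` and `L_k θ̃^i = -C^i_{kj} θ̃^j`
(the latter is `G`-equivariance, infinitesimally). -/
structure Connection {ι : Type} [Fintype ι] [DecidableEq ι]
    {𝔤 : Type} [LieRing 𝔤] [LieAlgebra ℝ 𝔤] (b : Module.Basis ι ℝ 𝔤)
    {A : Type} [Ring A] [Algebra ℝ A] (op : Operation 𝔤 A) where
  θ : ι → A
  θ_mem : ∀ i, θ i ∈ op.grading 1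
  I_θ : ∀ i j, op.I (b i) (θ j) = if i = j then 1 else 0
  L_θ : ∀ i j, op.L (b i) (θ j) = -∑ k, structConst b j i k • θ k

/-- The curvature `ω̃^i = dθ̃^i - ½ C^i_{jk} θ̃^j θ̃^k` of a connection. -/
def Connection.curv {ι : Type} [Fintype ι] [DecidableEq ι]
    {𝔤 : Type} [LieRing 𝔤] [LieAlgebra ℝ 𝔤] {b : Module.Basis ι ℝ 𝔤}
    {A : Type} [Ring A] [Algebra ℝ A] {op : Operation 𝔤 A}
    (c : Connection b op) (i : ι) : A :=
  op.d (c.θ i) - (1/2 : ℝ) • ∑ j, ∑ k, structConst b i j k • (c.θ j * c.θ k)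

end

noncomputable section
open scoped TensorProduct

variable {ι : Type} [Fintype ι] [DecidableEq ι] [LinearOrder ι]
variable {𝔤 : Type} [LieRing 𝔤] [LieAlgebra ℝ 𝔤]
variable {A : Type} [Ring A] [Algebra ℝ A]
variable {W : Type} [Ring W] [Algebra ℝ W]

/-- Truncated exponential `exp(f) = Σ_{n<N} fⁿ/n!` of an endomorphism (all our
exponents are of nilpotent operators, so a suitable finite truncation is exact). -/
def expEnd {M : Type} [AddCommGroup M] [Module ℝ M] (N : ℕ) (f : Module.End ℝ M) :
    Module.End ℝ M :=
  ∑ n ∈ Finset.range N, ((n.factorial : ℝ)⁻¹) • f ^ n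

/-- The operator `𝔸^j_i = θ^j ⊗ I_i` on `B = W_𝔤 ⊗ A`: left multiplication by `θ^j`
composed with the contraction `I_i` of `A` (extended to the tensor product with the
usual Koszul sign operator `ε` of `W`). -/
def AOp (b : Module.Basis ι ℝ 𝔤) (wd : WeilData ι b W) (op : Operation 𝔤 A)
    (ε : Module.End ℝ W) (j i : ι) : Module.End ℝ (W ⊗[ℝ] A) :=
  TensorProduct.map (LinearMap.mulLeft ℝ (wd.θ j) ∘ₗ ε) (op.I (b i))

/-- `𝔸_T = t^i_j 𝔸^j_i` for `T = t^i_j θ^j ⊗ e_i ∈ 𝔤* ⊗ 𝔤`. -/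
def AOpT (b : Module.Basis ι ℝ 𝔤) (wd : WeilData ι b W) (op : Operation 𝔤 A)
    (ε : Module.End ℝ W) (T : ι → ι → ℝ) : Module.End ℝ (W ⊗[ℝ] A) :=
  ∑ i, ∑ j, T i j • AOp b wd op ε j i

/-- The operator `𝕃^j_i = θ^j ⊗ L_i - Ω^j ⊗ I_i` on `B = W_𝔤 ⊗ A`. -/
def LOp (b : Module.Basis ι ℝ 𝔤) (wd : WeilData ι b W) (op : Operation 𝔤 A)
    (ε : Module.End ℝ W) (j i : ι) : Module.End ℝ (W ⊗[ℝ] A) :=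
  TensorProduct.map (LinearMap.mulLeft ℝ (wd.θ j)) (op.L (b i)) -
    TensorProduct.map (LinearMap.mulLeft ℝ (wd.Ω j) ∘ₗ ε) (op.I (b i))

/-- `𝕃_T = t^i_j 𝕃^j_i` for `T = t^i_j θ^j ⊗ e_i ∈ 𝔤* ⊗ 𝔤`. -/
def LOpT (b : Module.Basis ι ℝ 𝔤) (wd : WeilData ι b W) (op : Operation 𝔤 A)
    (ε : Module.End ℝ W) (T : ι → ι → ℝ) : Module.End ℝ (W ⊗[ℝ] A) :=
  ∑ i, ∑ j, T i j • LOp b wd op ε j i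

/-- The differential `D = d_W ⊗ 1 + ε ⊗ d` of the tensor product operation
`B = W_𝔤 ⊗ A` (`ε` the grading/sign operator of `W`). -/
def DTot {b : Module.Basis ι ℝ 𝔤} (wd : WeilData ι b W) (op : Operation 𝔤 A)
    (ε : Module.End ℝ W) : Module.End ℝ (W ⊗[ℝ] A) :=
  LinearMap.rTensor A wd.d + TensorProduct.map ε op.d

/-- The total Lie derivative `L_X = L_X ⊗ 1 + 1 ⊗ L_X` of `B = W_𝔤 ⊗ A`. -/
def LTot {b : Module.Basis ι ℝ 𝔤} (wd : WeilData ι b W) (op : Operation 𝔤 A)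
    (X : 𝔤) : Module.End ℝ (W ⊗[ℝ] A) :=
  LinearMap.rTensor A (wd.L X) + LinearMap.lTensor W (op.L X)

/-- The total contraction `I_X = ι_X ⊗ 1 + ε ⊗ I_X` of `B = W_𝔤 ⊗ A`. -/
def ITot {b : Module.Basis ι ℝ 𝔤} (wd : WeilData ι b W) (op : Operation 𝔤 A)
    (ε : Module.End ℝ W) (X : 𝔤) : Module.End ℝ (W ⊗[ℝ] A) :=
  LinearMap.rTensor A (wd.I X) + TensorProduct.map ε (op.I X)

/-- The degree-`n` part of `W ⊗ A`. -/
def grTensor (b : Module.Basis ι ℝ 𝔤) (wd : WeilData ι b W) (op : Operation 𝔤 A) (n : ℤ) :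
    Submodule ℝ (W ⊗[ℝ] A) :=
  ⨆ p : ℤ, LinearMap.range
    (TensorProduct.map ((wd.grading p).subtype) ((op.grading (n - p)).subtype))



/-- For an ideal `𝔫 ⊆ 𝔤` (a submodule closed under bracketing by `𝔤`), the adjoint
action `ad_Y = ⁅Y, ·⁆` of `Y ∈ 𝔤` restricts to `𝔫`. -/
def adRes (𝔫 : Submodule ℝ 𝔤) (hn : ∀ (Y : 𝔤), ∀ x ∈ 𝔫, ⁅Y, x⁆ ∈ 𝔫) (Y : 𝔤) :
    ↥𝔫 →ₗ[ℝ] ↥𝔫 where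
  toFun X := ⟨⁅Y, (X : 𝔤)⁆, hn Y X X.2⟩
  map_add' X₁ X₂ := by ext; simp
  map_smul' t X := by ext; simp

/-- The moment map `μ(X) = -I_X θ̃ ∈ A⁰ ⊗ 𝔫` of a `G`-equivariant `N`-connection `θ̃`,
viewed (by pairing with `α ∈ 𝔫*`) as a linear map `𝔫* → A⁰` for each `X ∈ 𝔤`. -/
def moment {𝔫 : Submodule ℝ 𝔤} (op : Operation 𝔤 A)
    (θN : Module.Dual ℝ ↥𝔫 →ₗ[ℝ] A) (X : 𝔤) (α : Module.Dual ℝ ↥𝔫) : A :=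
  -op.I X (θN α)

/-! ### Statement 19 -/

variable {κ : Type} [Fintype κ] [DecidableEq κ] [LinearOrder κ]
variable {𝔮 : Type} [LieRing 𝔮] [LieAlgebra ℝ 𝔮]
variable {B : Type} [Ring B] [Algebra ℝ B]
variable {WQ : Type} [Ring WQ] [Algebra ℝ WQ]

/-!
Pulling back along `𝔤 → 𝔮` and `B → A` identifies the basic elements of `W_𝔮 ⊗ B` with those basic
elements of `W_𝔤 ⊗ A` that lie in the subalgebra `F = W_𝔮 ⊗ A`: being killed by `L_X` and `I_X` for
`X ∈ 𝔫` is, on `F`, a condition on the second factor only. It remains to contract the basic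
subcomplex onto its part in `F`. Let `δ` be the `𝔤`-horizontal part of the `𝔫`-connection, and let
`K = ∑ δ(eʲ) ∂/∂Ω(eⱼ)`, the sum running over a basis of `𝔫` and the partial derivatives being taken
with the Weil connection `θ` held fixed. Then `K` preserves the basic elements, and the derivation
`dK + Kd` vanishes on `F` and is `-1` on `δ` and `dδ`, because `θ + δ ∈ F`. As `F`, `δ` and `dδ`
generate `W_𝔤 ⊗ A`, the operator `dK + Kd` is diagonalizable with eigenvalues `0, -1, -2, …` and
every eigenvector for the eigenvalue `0` lies in `F`.
-/

/-! ### Signs and graded derivations -/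

theorem sgn_eq_negOnePow (n : ℤ) : sgn n = (n.negOnePow : ℤ) := by
  unfold sgn
  split_ifs with h
  · simp [Int.negOnePow_even n h]
  · simp [Int.negOnePow_odd n (Int.not_even_iff_odd.mp h)]

theorem sgn_add (m n : ℤ) : sgn (m + n) = sgn m * sgn n := by
  simp only [sgn_eq_negOnePow, Int.negOnePow_add, Units.val_mul]

theorem sgn_mul_self (n : ℤ) : sgn n * sgn n = 1 := by
  rw [sgn_eq_negOnePow, ← Units.val_mul, Int.units_mul_self, Units.val_one]

theorem sgn_neg (n : ℤ) : sgn (-n) = sgn n := by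
  simp only [sgn, even_neg]

theorem sgn_of_even {n : ℤ} (hn : Even n) : sgn n = 1 := if_pos hn

theorem sgn_one : sgn 1 = -1 := by decide

theorem sgn_eq_sgn {m n : ℤ} (h : Even (m - n)) : sgn m = sgn n := by
  rw [← sub_add_cancel m n, sgn_add, sgn_of_even h, one_mul]

theorem sgn_smul_sgn_smul {M : Type*} [AddCommGroup M] (n : ℤ) (x : M) :
    sgn n • sgn n • x = x := by
  rw [smul_smul, sgn_mul_self, one_smul]

section Graded

variable {𝒜 : ℤ → Submodule ℝ A}

variable (𝒜) in
/-- `f` is a derivation of degree `k` of the graded algebra `𝒜`, with the Koszul sign rule. -/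
structure IsGradedDerivation (k : ℤ) (f : Module.End ℝ A) : Prop where
  map_mem : ∀ {n : ℤ} {a : A}, a ∈ 𝒜 n → f a ∈ 𝒜 (n + k)
  map_mul : ∀ {n : ℤ} {a : A}, a ∈ 𝒜 n → ∀ b : A,
    f (a * b) = f a * b + sgn (k * n) • (a * f b)

namespace IsGradedDerivation

variable {k l : ℤ} {f g : Module.End ℝ A}

theorem zero : IsGradedDerivation 𝒜 k 0 :=
  ⟨fun _ => Submodule.zero_mem _, fun _ b => by simp⟩

theorem add (hf : IsGradedDerivation 𝒜 k f) (hg : IsGradedDerivation 𝒜 k g) :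
    IsGradedDerivation 𝒜 k (f + g) where
  map_mem ha := Submodule.add_mem _ (hf.map_mem ha) (hg.map_mem ha)
  map_mul ha b := by
    simp only [LinearMap.add_apply, hf.map_mul ha b, hg.map_mul ha b, add_mul, mul_add, smul_add]
    abel

theorem smul (hf : IsGradedDerivation 𝒜 k f) (c : ℝ) :
    IsGradedDerivation 𝒜 k (c • f) where
  map_mem ha := Submodule.smul_mem _ c (hf.map_mem ha)
  map_mul ha b := by
    simp only [LinearMap.smul_apply, hf.map_mul ha b, smul_add, smul_mul_assoc, mul_smul_comm,
      smul_comm c (sgn _)]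

theorem sum {ι : Type*} {s : Finset ι} {f : ι → Module.End ℝ A}
    (hf : ∀ i ∈ s, IsGradedDerivation 𝒜 k (f i)) : IsGradedDerivation 𝒜 k (∑ i ∈ s, f i) :=
  Finset.sum_induction f _ (fun _ _ => add) zero hf

theorem superbracket (hf : IsGradedDerivation 𝒜 k f) (hg : IsGradedDerivation 𝒜 l g) :
    IsGradedDerivation 𝒜 (k + l) (f ∘ₗ g - sgn (k * l) • (g ∘ₗ f)) where
  map_mem {n a} ha := by
    refine Submodule.sub_mem _ ?_ (zsmul_mem ?_ _)
    · exact (by ring : n + l + k = n + (k + l)) ▸ hf.map_mem (hg.map_mem ha)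
    · exact (by ring : n + k + l = n + (k + l)) ▸ hg.map_mem (hf.map_mem ha)
  map_mul {n a} ha b := by
    have hsgn : sgn (k * l) * sgn (l * k) = 1 := by rw [mul_comm l k, sgn_mul_self]
    simp only [LinearMap.sub_apply, LinearMap.smul_apply, LinearMap.comp_apply, hf.map_mul ha,
      hg.map_mul ha, map_add, map_zsmul, hf.map_mul (hg.map_mem ha), hg.map_mul (hf.map_mem ha),
      mul_add k, mul_add l, sgn_add, smul_add, smul_smul, add_mul, sub_mul, mul_sub,
      smul_mul_assoc, mul_smul_comm, smul_sub]
    have h1 : sgn (k * l) * (sgn (l * n) * sgn (l * k)) = sgn (l * n) := by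
      rw [mul_left_comm, hsgn, mul_one]
    rw [h1, mul_comm (sgn (k * n)) (sgn (k * l)), mul_comm (sgn (k * n)) (sgn (l * n)),
      mul_comm (sgn (l * n) * sgn (k * n)) (sgn (k * l)), mul_comm (sgn (l * n)) (sgn (k * n))]
    abel

end IsGradedDerivation

variable (𝒜) [GradedAlgebra 𝒜]

/-- The diagonal operator acting on `𝒜 n` as multiplication by the scalar `c n`. -/
def gradedScale (c : ℤ → ℝ) : Module.End ℝ A :=
  DirectSum.toModule ℝ ℤ A (fun n => c n • (𝒜 n).subtype) ∘ₗ
    (DirectSum.decomposeLinearEquiv 𝒜).toLinearMap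

/-- The degree operator, acting on `𝒜 n` as multiplication by `n`. -/
def degreeOp : Module.End ℝ A := gradedScale 𝒜 (fun n => n)

/-- The Koszul sign `a ↦ (-1)^(k |a|) a` produced by moving an object of degree `k` past `a`. -/
def signTwist (k : ℤ) : Module.End ℝ A := gradedScale 𝒜 (fun n => sgn (k * n))

variable {𝒜}

theorem gradedScale_of_mem (c : ℤ → ℝ) {n : ℤ} {a : A} (ha : a ∈ 𝒜 n) :
    gradedScale 𝒜 c a = c n • a := by
  simp only [gradedScale, LinearMap.comp_apply, LinearEquiv.coe_coe,
    DirectSum.decomposeLinearEquiv_apply, DirectSum.decompose_of_mem 𝒜 ha]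
  exact DirectSum.toModule_lof ℝ n _

theorem degreeOp_of_mem {n : ℤ} {a : A} (ha : a ∈ 𝒜 n) : degreeOp 𝒜 a = n • a := by
  rw [degreeOp, gradedScale_of_mem _ ha, Int.cast_smul_eq_zsmul]

theorem signTwist_of_mem (k : ℤ) {n : ℤ} {a : A} (ha : a ∈ 𝒜 n) :
    signTwist 𝒜 k a = sgn (k * n) • a := by
  rw [signTwist, gradedScale_of_mem _ ha, Int.cast_smul_eq_zsmul]

theorem linearMap_ext_homogeneous {M : Type*} [AddCommGroup M] [Module ℝ M] {f g : A →ₗ[ℝ] M}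
    (h : ∀ n, ∀ a ∈ 𝒜 n, f a = g a) : f = g :=
  DirectSum.decompose_lhom_ext 𝒜 fun n => LinearMap.ext fun a => h n a a.2

theorem signTwist_of_even {k : ℤ} (hk : Even k) : signTwist 𝒜 k = LinearMap.id :=
  linearMap_ext_homogeneous (𝒜 := 𝒜) fun n a ha => by
    rw [signTwist_of_mem k ha, sgn_of_even (hk.mul_right n), one_smul, LinearMap.id_apply]

theorem signTwist_comp_self (k : ℤ) : signTwist 𝒜 k ∘ₗ signTwist 𝒜 k = LinearMap.id :=
  linearMap_ext_homogeneous (𝒜 := 𝒜) fun n a ha => by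
    rw [LinearMap.comp_apply, signTwist_of_mem k ha, map_zsmul, signTwist_of_mem k ha,
      sgn_smul_sgn_smul, LinearMap.id_apply]

theorem eq_signTwist_of_odd {k : ℤ} (hk : Odd k) {ε : Module.End ℝ A}
    (hε : ∀ n, ∀ a ∈ 𝒜 n, ε a = sgn n • a) : ε = signTwist 𝒜 k :=
  linearMap_ext_homogeneous (𝒜 := 𝒜) fun n a ha => by
    obtain ⟨j, rfl⟩ := hk
    rw [hε n a ha, signTwist_of_mem _ ha,
      sgn_eq_sgn (m := n) (n := (2 * j + 1) * n) ⟨-(j * n), by ring⟩]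

theorem decompose_gradedScale (c : ℤ → ℝ) (a : A) (n : ℤ) :
    (DirectSum.decompose 𝒜 (gradedScale 𝒜 c a) n : A) = c n • (DirectSum.decompose 𝒜 a n : A) := by
  induction a using DirectSum.Decomposition.inductionOn 𝒜 with
  | zero => simp
  | add a a' iha iha' =>
    simp only [map_add, DirectSum.decompose_add, DirectSum.add_apply, Submodule.coe_add, iha, iha',
      smul_add]
  | @homogeneous m a =>
    rw [gradedScale_of_mem c a.2, DirectSum.decompose_smul, DirectSum.smul_apply,
      Submodule.coe_smul]
    by_cases hmn : m = n
    · subst hmn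
      rfl
    · rw [DirectSum.decompose_of_mem_ne 𝒜 a.2 hmn, smul_zero, smul_zero]

theorem mem_grading_iff_degreeOp {n : ℤ} {a : A} : a ∈ 𝒜 n ↔ degreeOp 𝒜 a = n • a := by
  classical
  refine ⟨degreeOp_of_mem, fun h => ?_⟩
  have component_eq_zero (m : ℤ) (hm : m ≠ n) : (DirectSum.decompose 𝒜 a m : A) = 0 := by
    have hcomp := decompose_gradedScale (𝒜 := 𝒜) (fun n => n) a m
    rw [← degreeOp, h, ← Int.cast_smul_eq_zsmul ℝ, DirectSum.decompose_smul, DirectSum.smul_apply,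
      Submodule.coe_smul, ← sub_eq_zero, ← sub_smul, ← Int.cast_sub] at hcomp
    exact (smul_eq_zero.mp hcomp).resolve_left (Int.cast_ne_zero.mpr (sub_ne_zero.mpr hm.symm))
  rw [← DirectSum.sum_support_decompose 𝒜 a]
  refine Submodule.sum_mem _ fun m _ => ?_
  by_cases hm : m = n
  · exact hm ▸ SetLike.coe_mem _
  · exact (component_eq_zero m hm) ▸ Submodule.zero_mem _

section Maps

variable {ℬ : ℤ → Submodule ℝ B} [GradedAlgebra ℬ]

theorem map_gradedScale {φ : A →ₗ[ℝ] B} (hφ : ∀ n, ∀ a ∈ 𝒜 n, φ a ∈ ℬ n) (c : ℤ → ℝ) (a : A) :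
    φ (gradedScale 𝒜 c a) = gradedScale ℬ c (φ a) :=
  LinearMap.congr_fun (f := φ ∘ₗ gradedScale 𝒜 c) (g := gradedScale ℬ c ∘ₗ φ)
    (linearMap_ext_homogeneous (𝒜 := 𝒜) fun n a ha => by
      simp only [LinearMap.comp_apply, gradedScale_of_mem c ha, gradedScale_of_mem c (hφ n a ha),
        map_smul]) a

theorem mem_grading_iff_of_injective {φ : A →ₗ[ℝ] B} (hφ : ∀ n, ∀ a ∈ 𝒜 n, φ a ∈ ℬ n)
    (hinj : Function.Injective φ) {n : ℤ} {a : A} : φ a ∈ ℬ n ↔ a ∈ 𝒜 n := by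
  rw [mem_grading_iff_degreeOp, mem_grading_iff_degreeOp, degreeOp, ← map_gradedScale hφ,
    ← map_zsmul, hinj.eq_iff, degreeOp]

end Maps

namespace IsGradedDerivation

variable {k l : ℤ} {f g : Module.End ℝ A}

theorem leibniz (hf : IsGradedDerivation 𝒜 k f) (a b : A) :
    f (a * b) = f a * b + signTwist 𝒜 k a * f b := by
  induction a using DirectSum.Decomposition.inductionOn 𝒜 with
  | zero => simp
  | add a a' iha iha' => rw [add_mul, map_add, iha, iha', map_add, map_add]; noncomm_ring
  | @homogeneous n a => rw [hf.map_mul a.2, signTwist_of_mem k a.2, smul_mul_assoc]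

theorem leibniz_of_even (hf : IsGradedDerivation 𝒜 k f) (hk : Even k) (a b : A) :
    f (a * b) = f a * b + a * f b := by
  rw [hf.leibniz, signTwist_of_even hk, LinearMap.id_apply]

theorem map_one (hf : IsGradedDerivation 𝒜 k f) : f 1 = 0 := by
  have h := hf.map_mul (SetLike.GradedOne.one_mem (A := 𝒜)) 1
  rw [mul_zero, sgn_of_even Even.zero, one_smul, mul_one, mul_one, one_mul] at h
  exact left_eq_add.mp h

theorem map_algebraMap (hf : IsGradedDerivation 𝒜 k f) (r : ℝ) : f (algebraMap ℝ A r) = 0 := by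
  rw [Algebra.algebraMap_eq_smul_one, map_smul, hf.map_one, smul_zero]

theorem mulLeft_comp (hcomm : ∀ {m n : ℤ} {a b : A}, a ∈ 𝒜 m → b ∈ 𝒜 n →
      a * b = sgn (m * n) • (b * a))
    {h : A} (hh : h ∈ 𝒜 l) (hf : IsGradedDerivation 𝒜 k f) :
    IsGradedDerivation 𝒜 (l + k) (LinearMap.mulLeft ℝ h ∘ₗ f) where
  map_mem {n a} ha := by
    exact (by ring : l + (n + k) = n + (l + k)) ▸ SetLike.mul_mem_graded hh (hf.map_mem ha)
  map_mul {n a} ha b := by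
    simp only [LinearMap.comp_apply, LinearMap.mulLeft_apply, hf.map_mul ha, mul_add, add_mul,
      mul_smul_comm, ← mul_assoc, hcomm hh ha, smul_mul_assoc, smul_smul, sgn_add]
    rw [mul_comm (sgn (k * n))]

theorem degreeOp : IsGradedDerivation 𝒜 0 (degreeOp 𝒜) where
  map_mem {n a} ha := by
    rw [degreeOp_of_mem ha, add_zero]
    exact zsmul_mem ha n
  map_mul {n a} ha b := by
    rw [zero_mul, sgn_of_even Even.zero, one_smul]
    induction b using DirectSum.Decomposition.inductionOn 𝒜 with
    | zero => simp
    | add b b' ihb ihb' => simp only [mul_add, map_add, ihb, ihb']; abel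
    | @homogeneous m b =>
      rw [degreeOp_of_mem ha, degreeOp_of_mem b.2,
        degreeOp_of_mem (SetLike.mul_mem_graded ha b.2), add_smul, smul_mul_assoc, mul_smul_comm]

variable {ℬ : ℤ → Submodule ℝ B} [GradedAlgebra ℬ]

/-- With `φ = id` this says that a graded derivation is determined by its values on generators. -/
theorem map_comm_of_adjoin_eq_top {D : Module.End ℝ B} {φ : A →ₐ[ℝ] B}
    (hf : IsGradedDerivation 𝒜 k f) (hD : IsGradedDerivation ℬ k D)
    (hφ : ∀ a, φ (signTwist 𝒜 k a) = signTwist ℬ k (φ a))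
    {s : Set A} (hs : Algebra.adjoin ℝ s = ⊤) (hfD : ∀ a ∈ s, φ (f a) = D (φ a)) (a : A) :
    φ (f a) = D (φ a) := by
  induction (hs ▸ Algebra.mem_top : a ∈ Algebra.adjoin ℝ s) using Algebra.adjoin_induction with
  | mem a ha => exact hfD a ha
  | algebraMap r => rw [hf.map_algebraMap, AlgHom.commutes, hD.map_algebraMap, map_zero]
  | add a b _ _ iha ihb => simp only [map_add, iha, ihb]
  | mul a b _ _ iha ihb =>
    rw [hf.leibniz, map_add, _root_.map_mul, _root_.map_mul, iha, ihb, hφ, _root_.map_mul,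
      hD.leibniz]

theorem ext_of_adjoin_eq_top (hf : IsGradedDerivation 𝒜 k f) (hg : IsGradedDerivation 𝒜 k g)
    {s : Set A} (hs : Algebra.adjoin ℝ s = ⊤) (hfg : ∀ a ∈ s, f a = g a) : f = g :=
  LinearMap.ext <| hf.map_comm_of_adjoin_eq_top (φ := AlgHom.id ℝ A) hg (fun _ => rfl) hs hfg

end IsGradedDerivation

variable {ℬ : ℤ → Submodule ℝ B} [GradedAlgebra ℬ]

theorem algHom_map_mem_of_adjoin_eq_top {φ : A →ₐ[ℝ] B} {s : Set A}
    (hs : Algebra.adjoin ℝ s = ⊤) (hφ : ∀ a ∈ s, ∃ n, a ∈ 𝒜 n ∧ φ a ∈ ℬ n)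
    {n : ℤ} {a : A} (ha : a ∈ 𝒜 n) : φ a ∈ ℬ n := by
  have hcomm := IsGradedDerivation.degreeOp.map_comm_of_adjoin_eq_top (𝒜 := 𝒜) (ℬ := ℬ) (φ := φ)
    IsGradedDerivation.degreeOp
    (fun a => by simp only [signTwist_of_even Even.zero, LinearMap.id_apply]) hs
    (fun a ha => by
      obtain ⟨n, han, hφan⟩ := hφ a ha
      rw [degreeOp_of_mem han, degreeOp_of_mem hφan, map_zsmul])
  rw [mem_grading_iff_degreeOp, ← hcomm, degreeOp_of_mem ha, map_zsmul]

theorem isGradedDerivation_of_adjoin_eq_top {k : ℤ} (hk : Even k) {f : Module.End ℝ A}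
    (hf : ∀ a b, f (a * b) = f a * b + a * f b) {s : Set A} (hs : Algebra.adjoin ℝ s = ⊤)
    (hfs : ∀ a ∈ s, ∃ n, a ∈ 𝒜 n ∧ f a ∈ 𝒜 (n + k)) : IsGradedDerivation 𝒜 k f where
  map_mul {n _} _ b := by rw [hf, sgn_of_even (hk.mul_right n), one_smul]
  map_mem {n a} ha := by
    have map_one : f 1 = 0 := by simpa using hf 1 1
    have hcomm (a : A) : degreeOp 𝒜 (f a) = f (degreeOp 𝒜 a) + k • f a := by
      induction (hs ▸ Algebra.mem_top : a ∈ Algebra.adjoin ℝ s) using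
          Algebra.adjoin_induction with
      | mem a ha =>
        obtain ⟨n, han, hfan⟩ := hfs a ha
        rw [degreeOp_of_mem han, degreeOp_of_mem hfan, map_zsmul, add_smul]
      | algebraMap r =>
        rw [IsGradedDerivation.degreeOp.map_algebraMap, Algebra.algebraMap_eq_smul_one, map_smul,
          map_one, smul_zero, map_zero, map_zero, smul_zero, add_zero]
      | add a b _ _ iha ihb => simp only [map_add, iha, ihb, smul_add]; abel
      | mul a b _ _ iha ihb =>
        have deg_mul := IsGradedDerivation.degreeOp.leibniz_of_even (𝒜 := 𝒜) Even.zero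
        simp only [hf, map_add, deg_mul, iha, ihb, add_mul, mul_add, smul_add, smul_mul_assoc,
          mul_smul_comm]
        abel
    rw [mem_grading_iff_degreeOp, hcomm, degreeOp_of_mem ha, map_zsmul, add_smul]

end Graded

/-! ### Graded tensor products -/

section GradedTensor

open GradedTensorProduct

variable (𝒜 : ℤ → Submodule ℝ A) [GradedAlgebra 𝒜] (ℬ : ℤ → Submodule ℝ B) [GradedAlgebra ℬ]

/-- The total grading of a graded tensor product, in the form used by `grTensor`. -/
def totalGrading (n : ℤ) : Submodule ℝ (𝒜 ᵍ⊗[ℝ] ℬ) :=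
  (⨆ p : ℤ, LinearMap.range (TensorProduct.map (𝒜 p).subtype (ℬ (n - p)).subtype)).comap
    (GradedTensorProduct.of ℝ 𝒜 ℬ).symm.toLinearMap

/-- The extension `a ⊗ b ↦ f a ⊗ b + (-1)^(k |a|) a ⊗ g b` of a pair of operators of degree `k`
to the tensor product. -/
def tensorDer (k : ℤ) (f : Module.End ℝ A) (g : Module.End ℝ B) : Module.End ℝ (𝒜 ᵍ⊗[ℝ] ℬ) :=
  (GradedTensorProduct.of ℝ 𝒜 ℬ).conj
    (LinearMap.rTensor B f + TensorProduct.map (signTwist 𝒜 k) g)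

variable {𝒜 ℬ}

theorem zsmul_tmul (c : ℤ) (a : A) (b : B) :
    ((c • a) ᵍ⊗ₜ[ℝ] b : 𝒜 ᵍ⊗[ℝ] ℬ) = c • a ᵍ⊗ₜ[ℝ] b :=
  map_zsmul ((TensorProduct.mk ℝ A B).flip b) c a

theorem tmul_zsmul (c : ℤ) (a : A) (b : B) :
    (a ᵍ⊗ₜ[ℝ] (c • b) : 𝒜 ᵍ⊗[ℝ] ℬ) = c • a ᵍ⊗ₜ[ℝ] b :=
  map_zsmul (TensorProduct.mk ℝ A B a) c b

theorem add_tmul (a a' : A) (b : B) :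
    ((a + a') ᵍ⊗ₜ[ℝ] b : 𝒜 ᵍ⊗[ℝ] ℬ) = a ᵍ⊗ₜ[ℝ] b + a' ᵍ⊗ₜ[ℝ] b :=
  TensorProduct.add_tmul a a' b

theorem tmul_add (a : A) (b b' : B) :
    (a ᵍ⊗ₜ[ℝ] (b + b') : 𝒜 ᵍ⊗[ℝ] ℬ) = a ᵍ⊗ₜ[ℝ] b + a ᵍ⊗ₜ[ℝ] b' :=
  TensorProduct.tmul_add a b b'

theorem tmul_mul_tmul {m n : ℤ} (a : A) {b : B} (hb : b ∈ ℬ m) {a' : A} (ha' : a' ∈ 𝒜 n) (b' : B) :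
    (a ᵍ⊗ₜ[ℝ] b * a' ᵍ⊗ₜ[ℝ] b' : 𝒜 ᵍ⊗[ℝ] ℬ) = sgn (m * n) • (a * a') ᵍ⊗ₜ[ℝ] (b * b') := by
  have h := tmul_coe_mul_coe_tmul (R := ℝ) 𝒜 ℬ a ⟨b, hb⟩ ⟨a', ha'⟩ b'
  rw [Units.smul_def] at h
  rw [h, sgn_eq_negOnePow]
  rfl

theorem tmul_mem_totalGrading {m n : ℤ} {a : A} {b : B} (ha : a ∈ 𝒜 m) (hb : b ∈ ℬ n) :
    (a ᵍ⊗ₜ[ℝ] b : 𝒜 ᵍ⊗[ℝ] ℬ) ∈ totalGrading 𝒜 ℬ (m + n) := by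
  have hb' : b ∈ ℬ (m + n - m) := (add_sub_cancel_left m n).symm ▸ hb
  exact Submodule.mem_iSup_of_mem m ⟨⟨a, ha⟩ ⊗ₜ ⟨b, hb'⟩, rfl⟩

theorem mul_zsmul_gradedTensor (c : ℤ) (x y : 𝒜 ᵍ⊗[ℝ] ℬ) : x * (c • y) = c • (x * y) :=
  map_zsmul (AddMonoidHom.mulLeft x) c y

theorem gradedTensor_induction {motive : 𝒜 ᵍ⊗[ℝ] ℬ → Prop} (zero : motive 0)
    (add : ∀ x y, motive x → motive y → motive (x + y))
    (tmul : ∀ m n, ∀ a ∈ 𝒜 m, ∀ b ∈ ℬ n, motive (a ᵍ⊗ₜ[ℝ] b)) (x : 𝒜 ᵍ⊗[ℝ] ℬ) : motive x := by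
  induction x using TensorProduct.induction_on with
  | zero => exact zero
  | add x y hx hy => exact add x y hx hy
  | tmul a b =>
    induction a using DirectSum.Decomposition.inductionOn 𝒜 with
    | zero => rw [TensorProduct.zero_tmul]; exact zero
    | add a a' iha iha' => rw [TensorProduct.add_tmul]; exact add _ _ iha iha'
    | homogeneous a =>
      induction b using DirectSum.Decomposition.inductionOn ℬ with
      | zero => rw [TensorProduct.tmul_zero]; exact zero
      | add b b' ihb ihb' => rw [TensorProduct.tmul_add]; exact add _ _ ihb ihb'
      | homogeneous b => exact tmul _ _ a a.2 b b.2

theorem totalGrading_induction {k : ℤ}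
    {motive : ∀ x : 𝒜 ᵍ⊗[ℝ] ℬ, x ∈ totalGrading 𝒜 ℬ k → Prop}
    (zero : motive 0 (Submodule.zero_mem _))
    (add : ∀ x y hx hy, motive x hx → motive y hy → motive (x + y) (Submodule.add_mem _ hx hy))
    (tmul : ∀ (m n : ℤ) (hmn : m + n = k) (a : A) (ha : a ∈ 𝒜 m) (b : B) (hb : b ∈ ℬ n),
      motive (a ᵍ⊗ₜ[ℝ] b) (hmn ▸ tmul_mem_totalGrading ha hb))
    {x : 𝒜 ᵍ⊗[ℝ] ℬ} (hx : x ∈ totalGrading 𝒜 ℬ k) : motive x hx := by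
  have congr {x y : 𝒜 ᵍ⊗[ℝ] ℬ} (h : x = y) (hx : x ∈ totalGrading 𝒜 ℬ k) (hy)
      (hm : motive y hy) : motive x hx := by subst h; exact hm
  refine Submodule.iSup_induction' _ (motive := motive) (fun p x hx => ?_) zero add hx
  obtain ⟨y, rfl⟩ := hx
  induction y using TensorProduct.induction_on with
  | zero => exact congr (map_zero _) _ _ zero
  | add y z hy hz => exact congr (map_add _ _ _) _ _ (add _ _ _ _ hy hz)
  | tmul a b => exact tmul p (k - p) (add_sub_cancel p k) a a.2 b b.2

theorem gradedTensor_linearMap_ext {M : Type*} [AddCommGroup M] [Module ℝ M]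
    {f g : 𝒜 ᵍ⊗[ℝ] ℬ →ₗ[ℝ] M}
    (h : ∀ m n, ∀ a ∈ 𝒜 m, ∀ b ∈ ℬ n, f (a ᵍ⊗ₜ[ℝ] b) = g (a ᵍ⊗ₜ[ℝ] b)) : f = g :=
  LinearMap.ext <| gradedTensor_induction (by rw [map_zero, map_zero])
    (fun x y hx hy => by rw [map_add, map_add, hx, hy]) h

section tensorDer

variable {k l : ℤ} {f f' : Module.End ℝ A} {g g' : Module.End ℝ B}

theorem tensorDer_tmul (k : ℤ) (f : Module.End ℝ A) (g : Module.End ℝ B) {m : ℤ} {a : A}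
    (ha : a ∈ 𝒜 m) (b : B) : tensorDer 𝒜 ℬ k f g (a ᵍ⊗ₜ[ℝ] b) =
      f a ᵍ⊗ₜ[ℝ] b + sgn (k * m) • a ᵍ⊗ₜ[ℝ] g b := by
  rw [← zsmul_tmul, ← signTwist_of_mem k ha]
  rfl

theorem IsGradedDerivation.tensorDer (hf : IsGradedDerivation 𝒜 k f)
    (hg : IsGradedDerivation ℬ k g) :
    IsGradedDerivation (totalGrading 𝒜 ℬ) k (tensorDer 𝒜 ℬ k f g) where
  map_mem {n x} hx := by
    induction hx using totalGrading_induction with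
    | zero => rw [map_zero]; exact Submodule.zero_mem _
    | add x y _ _ hx hy => rw [map_add]; exact Submodule.add_mem _ hx hy
    | tmul p q hpq a ha b hb =>
      rw [tensorDer_tmul k f g ha]
      refine Submodule.add_mem _ ?_ (zsmul_mem ?_ _)
      · exact (by rw [← hpq]; ring : p + k + q = n + k) ▸
          tmul_mem_totalGrading (hf.map_mem ha) hb
      · exact (by rw [← hpq]; ring : p + (q + k) = n + k) ▸
          tmul_mem_totalGrading ha (hg.map_mem hb)
  map_mul {n x} hx y := by
    induction hx using totalGrading_induction with
    | zero => simp only [zero_mul, map_zero, smul_zero, add_zero]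
    | add x x' _ _ hx hx' => simp only [add_mul, map_add, hx, hx', smul_add]; abel
    | tmul p q hpq a ha b hb =>
    induction y using gradedTensor_induction with
    | zero => simp only [mul_zero, map_zero, smul_zero, add_zero]
    | add y y' hy hy' => simp only [mul_add, map_add, hy, hy', smul_add]; abel
    | tmul p' _ a' ha' b' _ =>
      rw [tmul_mul_tmul a hb ha' b', map_zsmul, tensorDer_tmul k f g ha, tensorDer_tmul k f g ha',
        tensorDer_tmul k f g (SetLike.mul_mem_graded ha ha'), add_mul,
        mul_add (_ ᵍ⊗ₜ[ℝ] _), tmul_mul_tmul _ hb ha', smul_mul_assoc,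
        tmul_mul_tmul _ (hg.map_mem hb) ha', tmul_mul_tmul _ hb (hf.map_mem ha'),
        mul_zsmul_gradedTensor, tmul_mul_tmul _ hb ha', hf.map_mul ha, hg.map_mul hb, add_tmul,
        tmul_add, zsmul_tmul, tmul_zsmul]
      simp only [smul_add, smul_smul, ← sgn_add, ← hpq]
      rw [sgn_eq_sgn (m := q * p' + (k * (p + p'))) (n := k * p + (q + k) * p') ⟨0, by ring⟩,
        sgn_eq_sgn (m := k * (p + q) + q * (p' + k)) (n := q * p' + k * p) ⟨k * q, by ring⟩,
        sgn_eq_sgn (m := q * p' + (k * (p + p') + k * q)) (n := k * (p + q) + (k * p' + q * p'))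
          ⟨0, by ring⟩]
      abel

variable (ℬ) in
/-- The sign rules cancel the mixed terms. -/
theorem tensorDer_superbracket (hf : IsGradedDerivation 𝒜 k f) (hf' : IsGradedDerivation 𝒜 l f')
    (g g' : Module.End ℝ B) :
    tensorDer 𝒜 ℬ k f g ∘ₗ tensorDer 𝒜 ℬ l f' g' -
      sgn (k * l) • (tensorDer 𝒜 ℬ l f' g' ∘ₗ tensorDer 𝒜 ℬ k f g) =
    tensorDer 𝒜 ℬ (k + l) (f ∘ₗ f' - sgn (k * l) • (f' ∘ₗ f))
      (g ∘ₗ g' - sgn (k * l) • (g' ∘ₗ g)) := by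
  refine gradedTensor_linearMap_ext fun m _ a ha b _ => ?_
  have sub_tmul (x y : A) : ((x - y) ᵍ⊗ₜ[ℝ] b : 𝒜 ᵍ⊗[ℝ] ℬ) = x ᵍ⊗ₜ[ℝ] b - y ᵍ⊗ₜ[ℝ] b :=
    TensorProduct.sub_tmul x y b
  have tmul_sub (x y : B) : (a ᵍ⊗ₜ[ℝ] (x - y) : 𝒜 ᵍ⊗[ℝ] ℬ) = a ᵍ⊗ₜ[ℝ] x - a ᵍ⊗ₜ[ℝ] y :=
    TensorProduct.tmul_sub a x y
  simp only [LinearMap.sub_apply, LinearMap.smul_apply, LinearMap.comp_apply,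
    tensorDer_tmul _ _ _ ha, map_add, map_zsmul, tensorDer_tmul _ _ _ (hf.map_mem ha),
    tensorDer_tmul _ _ _ (hf'.map_mem ha), sub_tmul,
    tmul_sub, zsmul_tmul, tmul_zsmul, smul_add, smul_sub,
    smul_smul, ← sgn_add]
  rw [sgn_eq_sgn (m := k * (m + l)) (n := k * l + k * m) ⟨0, by ring⟩,
    sgn_eq_sgn (m := k * l + l * (m + k)) (n := l * m) ⟨k * l, by ring⟩,
    sgn_eq_sgn (m := l * m + k * m) (n := (k + l) * m) ⟨0, by ring⟩,
    sgn_eq_sgn (m := k * l + (k * m + l * m)) (n := (k + l) * m + k * l) ⟨0, by ring⟩]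
  abel

theorem tensorDer_add : tensorDer 𝒜 ℬ k (f + f') (g + g') =
    tensorDer 𝒜 ℬ k f g + tensorDer 𝒜 ℬ k f' g' := by
  simp only [tensorDer, ← map_add, LinearMap.rTensor_add, TensorProduct.map_add_right]
  rw [add_add_add_comm]

theorem tensorDer_smul (c : ℝ) :
    tensorDer 𝒜 ℬ k (c • f) (c • g) = c • tensorDer 𝒜 ℬ k f g := by
  simp only [tensorDer, ← map_smul, LinearMap.rTensor_smul, TensorProduct.map_smul_right, smul_add]

theorem tensorDer_zero : tensorDer 𝒜 ℬ k 0 0 = 0 := by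
  simp only [tensorDer, LinearMap.rTensor_zero, TensorProduct.map_zero_right, add_zero, map_zero]

theorem lTensor_eq_zero_of_tensorDer_zero_left {k : ℤ} {g : Module.End ℝ B} {y : 𝒜 ᵍ⊗[ℝ] ℬ}
    (hy : tensorDer 𝒜 ℬ k 0 g y = 0) : g.lTensor A ((of ℝ 𝒜 ℬ).symm y) = 0 := by
  have twisted : TensorProduct.map (signTwist 𝒜 k) g ((of ℝ 𝒜 ℬ).symm y) = 0 := by
    rwa [tensorDer, LinearMap.rTensor_zero, zero_add] at hy
  have untwist := congrArg ((signTwist 𝒜 k).rTensor B) twisted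
  rwa [map_zero, ← LinearMap.comp_apply, LinearMap.rTensor_comp_map, signTwist_comp_self] at untwist

end tensorDer

theorem one_mem_totalGrading : (1 : 𝒜 ᵍ⊗[ℝ] ℬ) ∈ totalGrading 𝒜 ℬ 0 :=
  add_zero (0 : ℤ) ▸ tmul_mem_totalGrading (SetLike.one_mem_graded 𝒜) (SetLike.one_mem_graded ℬ)

theorem mul_mem_totalGrading {m n : ℤ} {x y : 𝒜 ᵍ⊗[ℝ] ℬ} (hx : x ∈ totalGrading 𝒜 ℬ m)
    (hy : y ∈ totalGrading 𝒜 ℬ n) : x * y ∈ totalGrading 𝒜 ℬ (m + n) := by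
  induction hx using totalGrading_induction with
  | zero => rw [zero_mul]; exact Submodule.zero_mem _
  | add x x' _ _ hx hx' => rw [add_mul]; exact Submodule.add_mem _ hx hx'
  | tmul p q hpq a ha b hb =>
  induction hy using totalGrading_induction with
  | zero => rw [mul_zero]; exact Submodule.zero_mem _
  | add y y' _ _ hy hy' => rw [mul_add]; exact Submodule.add_mem _ hy hy'
  | tmul p' q' hpq' a' ha' b' hb' =>
    rw [tmul_mul_tmul a hb ha' b']
    exact zsmul_mem ((by rw [← hpq, ← hpq']; ring : p + p' + (q + q') = m + n) ▸
      tmul_mem_totalGrading (SetLike.mul_mem_graded ha ha') (SetLike.mul_mem_graded hb hb')) _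

theorem supercomm_totalGrading
    (hA : ∀ {m n : ℤ} {a a' : A}, a ∈ 𝒜 m → a' ∈ 𝒜 n → a * a' = sgn (m * n) • (a' * a))
    (hB : ∀ {m n : ℤ} {b b' : B}, b ∈ ℬ m → b' ∈ ℬ n → b * b' = sgn (m * n) • (b' * b))
    {m n : ℤ} {x y : 𝒜 ᵍ⊗[ℝ] ℬ} (hx : x ∈ totalGrading 𝒜 ℬ m) (hy : y ∈ totalGrading 𝒜 ℬ n) :
    x * y = sgn (m * n) • (y * x) := by
  induction hx using totalGrading_induction with
  | zero => rw [zero_mul, mul_zero, smul_zero]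
  | add x x' _ _ hx hx' => rw [add_mul, mul_add, smul_add, hx, hx']
  | tmul p q hpq a ha b hb =>
  induction hy using totalGrading_induction with
  | zero => rw [zero_mul, mul_zero, smul_zero]
  | add y y' _ _ hy hy' => rw [add_mul, mul_add, smul_add, hy, hy']
  | tmul p' q' hpq' a' ha' b' hb' =>
    rw [tmul_mul_tmul a hb ha' b', tmul_mul_tmul a' hb' ha b, hA ha ha', hB hb hb', zsmul_tmul,
      tmul_zsmul, smul_smul, smul_smul, smul_smul, ← sgn_add, ← sgn_add, ← sgn_add, ← hpq, ← hpq',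
      sgn_eq_sgn (n := (p + q) * (p' + q') + q' * p) ⟨-p * q', by ring⟩]

/-- The graded pieces are the eigenspaces of the total degree operator. -/
theorem iSupIndep_totalGrading : iSupIndep (totalGrading 𝒜 ℬ) := by
  let deg := tensorDer 𝒜 ℬ 0 (degreeOp 𝒜) (degreeOp ℬ)
  have le_eigenspace (n : ℤ) : totalGrading 𝒜 ℬ n ≤ deg.eigenspace (n : ℝ) := fun x hx => by
    rw [Module.End.mem_eigenspace_iff, Int.cast_smul_eq_zsmul]
    induction hx using totalGrading_induction with
    | zero => rw [map_zero, smul_zero]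
    | add x y _ _ hx hy => rw [map_add, smul_add, hx, hy]
    | tmul p q hpq a ha b hb =>
      rw [tensorDer_tmul _ _ _ ha, degreeOp_of_mem ha, degreeOp_of_mem hb, zsmul_tmul, tmul_zsmul,
        zero_mul, sgn_of_even Even.zero, one_smul, ← add_smul, hpq]
  exact (deg.eigenspaces_iSupIndep.comp Int.cast_injective).mono le_eigenspace

theorem iSup_totalGrading : ⨆ n, totalGrading 𝒜 ℬ n = ⊤ := by
  refine Submodule.eq_top_iff'.2 <| gradedTensor_induction (Submodule.zero_mem _)
    (fun _ _ => Submodule.add_mem _) fun m n a ha b hb => ?_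
  exact Submodule.mem_iSup_of_mem (m + n) (tmul_mem_totalGrading ha hb)

instance : GradedAlgebra (totalGrading 𝒜 ℬ) where
  one_mem := one_mem_totalGrading
  mul_mem _ _ _ _ := mul_mem_totalGrading
  toDecomposition := DirectSum.IsInternal.chooseDecomposition _ <|
    (DirectSum.isInternal_submodule_iff_iSupIndep_and_iSup_eq_top _).2
      ⟨iSupIndep_totalGrading, iSup_totalGrading⟩

theorem includeLeft_mem_totalGrading {n : ℤ} {a : A} (ha : a ∈ 𝒜 n) :
    includeLeft 𝒜 ℬ a ∈ totalGrading 𝒜 ℬ n :=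
  add_zero n ▸ tmul_mem_totalGrading ha (SetLike.one_mem_graded ℬ)

theorem includeRight_mem_totalGrading {n : ℤ} {b : B} (hb : b ∈ ℬ n) :
    includeRight 𝒜 ℬ b ∈ totalGrading 𝒜 ℬ n :=
  zero_add n ▸ tmul_mem_totalGrading (SetLike.one_mem_graded 𝒜) hb

theorem tensorDer_includeLeft (k : ℤ) (f : Module.End ℝ A) {g : Module.End ℝ B} (hg : g 1 = 0)
    (a : A) : tensorDer 𝒜 ℬ k f g (includeLeft 𝒜 ℬ a) = includeLeft 𝒜 ℬ (f a) := by
  change f a ⊗ₜ[ℝ] (1 : B) + signTwist 𝒜 k a ⊗ₜ[ℝ] g 1 = f a ⊗ₜ[ℝ] (1 : B)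
  rw [hg, TensorProduct.tmul_zero, add_zero]

theorem tensorDer_includeRight (k : ℤ) {f : Module.End ℝ A} (hf : f 1 = 0) (g : Module.End ℝ B)
    (b : B) : tensorDer 𝒜 ℬ k f g (includeRight 𝒜 ℬ b) = includeRight 𝒜 ℬ (g b) := by
  change f 1 ⊗ₜ[ℝ] b + signTwist 𝒜 k 1 ⊗ₜ[ℝ] g b = (1 : A) ⊗ₜ[ℝ] g b
  rw [hf, TensorProduct.zero_tmul, zero_add, signTwist_of_mem k (SetLike.one_mem_graded 𝒜),
    mul_zero, sgn_of_even Even.zero, one_smul]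

section Map

variable {A' B' : Type} [Ring A'] [Algebra ℝ A'] [Ring B'] [Algebra ℝ B']
  {𝒜' : ℤ → Submodule ℝ A'} [GradedAlgebra 𝒜'] {ℬ' : ℤ → Submodule ℝ B'} [GradedAlgebra ℬ']

/-- The algebra homomorphism `φ ⊗ χ` between graded tensor products. -/
def gradedTensorMap (φ : A →ₐ[ℝ] A') (χ : B →ₐ[ℝ] B') (hφ : ∀ n, ∀ a ∈ 𝒜 n, φ a ∈ 𝒜' n)
    (hχ : ∀ n, ∀ b ∈ ℬ n, χ b ∈ ℬ' n) : 𝒜 ᵍ⊗[ℝ] ℬ →ₐ[ℝ] 𝒜' ᵍ⊗[ℝ] ℬ' :=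
  GradedTensorProduct.lift 𝒜 ℬ ((includeLeft 𝒜' ℬ').comp φ) ((includeRight 𝒜' ℬ').comp χ)
    fun m n a b => by
      have hb := tmul_mul_tmul (ℬ := ℬ') (1 : A') (hχ n b b.2) (hφ m a a.2) 1
      rw [one_mul, mul_one] at hb
      rw [← Int.negOnePow_def, Units.smul_def, ← sgn_eq_negOnePow]
      change φ a ᵍ⊗ₜ[ℝ] 1 * 1 ᵍ⊗ₜ[ℝ] χ b = sgn (n * m) • (1 ᵍ⊗ₜ[ℝ] χ b * φ a ᵍ⊗ₜ[ℝ] 1)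
      rw [hb, smul_smul, sgn_mul_self, one_smul, tmul_one_mul_one_tmul]

variable {φ : A →ₐ[ℝ] A'} {χ : B →ₐ[ℝ] B'} (hφ : ∀ n, ∀ a ∈ 𝒜 n, φ a ∈ 𝒜' n)
  (hχ : ∀ n, ∀ b ∈ ℬ n, χ b ∈ ℬ' n)

theorem gradedTensorMap_tmul (a : A) (b : B) :
    gradedTensorMap φ χ hφ hχ (a ᵍ⊗ₜ[ℝ] b) = φ a ᵍ⊗ₜ[ℝ] χ b :=
  tmul_one_mul_one_tmul 𝒜' ℬ' (φ a) (χ b)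

theorem gradedTensorMap_mem {n : ℤ} {x : 𝒜 ᵍ⊗[ℝ] ℬ} (hx : x ∈ totalGrading 𝒜 ℬ n) :
    gradedTensorMap φ χ hφ hχ x ∈ totalGrading 𝒜' ℬ' n := by
  induction hx using totalGrading_induction with
  | zero => rw [map_zero]; exact Submodule.zero_mem _
  | add x y _ _ hx hy => rw [map_add]; exact Submodule.add_mem _ hx hy
  | tmul p q hpq a ha b hb =>
    rw [gradedTensorMap_tmul]
    exact hpq ▸ tmul_mem_totalGrading (hφ p a ha) (hχ q b hb)

theorem gradedTensorMap_tensorDer (k : ℤ) {f : Module.End ℝ A} {f' : Module.End ℝ A'}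
    {g : Module.End ℝ B} {g' : Module.End ℝ B'} (hf : ∀ a, φ (f a) = f' (φ a))
    (hg : ∀ b, χ (g b) = g' (χ b)) (x : 𝒜 ᵍ⊗[ℝ] ℬ) :
    gradedTensorMap φ χ hφ hχ (tensorDer 𝒜 ℬ k f g x) =
      tensorDer 𝒜' ℬ' k f' g' (gradedTensorMap φ χ hφ hχ x) := by
  induction x using gradedTensor_induction with
  | zero => simp only [map_zero]
  | add x y hx hy => simp only [map_add, hx, hy]
  | tmul m _ a ha b _ =>
    rw [gradedTensorMap_tmul, tensorDer_tmul k f g ha, tensorDer_tmul k f' g' (hφ m a ha),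
      map_add, map_zsmul, gradedTensorMap_tmul, gradedTensorMap_tmul, hf, hg]

theorem of_symm_gradedTensorMap (x : 𝒜 ᵍ⊗[ℝ] ℬ) :
    (of ℝ 𝒜' ℬ').symm (gradedTensorMap φ χ hφ hχ x) =
      TensorProduct.map φ.toLinearMap χ.toLinearMap ((of ℝ 𝒜 ℬ).symm x) := by
  induction x using gradedTensor_induction with
  | zero => simp only [map_zero]
  | add x y hx hy => simp only [map_add, hx, hy]
  | tmul _ _ a _ b _ => exact congrArg (of ℝ 𝒜' ℬ').symm (gradedTensorMap_tmul hφ hχ a b)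

theorem gradedTensorMap_injective (hφinj : Function.Injective φ) (hχinj : Function.Injective χ) :
    Function.Injective (gradedTensorMap φ χ hφ hχ) := fun x y hxy => by
  have hmap := congrArg (of ℝ 𝒜' ℬ').symm hxy
  rw [of_symm_gradedTensorMap, of_symm_gradedTensorMap] at hmap
  exact (of ℝ 𝒜 ℬ).symm.injective
    (TensorProduct.map_injective_of_flat_flat _ _ hφinj hχinj hmap)

end Map

end GradedTensor

/-! ### Tensor products and homomorphisms of operations -/

namespace Operation

open GradedTensorProduct

instance (op : Operation 𝔤 A) : GradedAlgebra op.grading where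
  one_mem := op.one_mem
  mul_mem _ _ _ _ := op.mul_mem
  toDecomposition := op.decomposition

theorem isGradedDerivation_d (op : Operation 𝔤 A) : IsGradedDerivation op.grading 1 op.d where
  map_mem := op.d_mem
  map_mul ha b := by rw [op.d_mul ha, one_mul]

theorem isGradedDerivation_L (op : Operation 𝔤 A) (X : 𝔤) :
    IsGradedDerivation op.grading 0 (op.L X) where
  map_mem {n _} ha := (add_zero n).symm ▸ op.L_mem X ha
  map_mul _ b := by rw [op.L_mul, zero_mul, sgn_of_even Even.zero, one_smul]

theorem isGradedDerivation_I (op : Operation 𝔤 A) (X : 𝔤) :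
    IsGradedDerivation op.grading (-1) (op.I X) where
  map_mem := op.I_mem X
  map_mul ha b := by rw [op.I_mul X ha, neg_one_mul, sgn_neg]

theorem d_d (op : Operation 𝔤 A) (a : A) : op.d (op.d a) = 0 :=
  LinearMap.congr_fun op.d_sq a

theorem I_d (op : Operation 𝔤 A) (X : 𝔤) (a : A) :
    op.I X (op.d a) = op.L X a - op.d (op.I X a) :=
  eq_sub_of_add_eq (LinearMap.congr_fun (op.cartan X) a)

/-- The tensor product of two operations of the same Lie algebra. -/
def tensor (op₁ : Operation 𝔤 A) (op₂ : Operation 𝔤 B) :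
    Operation 𝔤 (op₁.grading ᵍ⊗[ℝ] op₂.grading) where
  grading := totalGrading op₁.grading op₂.grading
  decomposition := inferInstance
  one_mem := one_mem_totalGrading
  mul_mem := mul_mem_totalGrading
  supercomm := supercomm_totalGrading op₁.supercomm op₂.supercomm
  d := tensorDer _ _ 1 op₁.d op₂.d
  d_mem := (op₁.isGradedDerivation_d.tensorDer op₂.isGradedDerivation_d).map_mem
  d_mul ha b := by
    rw [(op₁.isGradedDerivation_d.tensorDer op₂.isGradedDerivation_d).map_mul ha, one_mul]
  d_sq := by
    have h := tensorDer_superbracket op₂.grading op₁.isGradedDerivation_d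
      op₁.isGradedDerivation_d op₂.d op₂.d
    simp only [d_sq, mul_one, sgn_one, neg_smul, one_smul, sub_neg_eq_add, add_zero,
      tensorDer_zero] at h
    exact (smul_eq_zero.1 ((two_smul ℝ _).trans h)).resolve_left two_ne_zero
  L :=
    { toFun X := tensorDer _ _ 0 (op₁.L X) (op₂.L X)
      map_add' X Y := by rw [map_add, map_add, tensorDer_add]
      map_smul' c X := by rw [map_smul, map_smul, tensorDer_smul, RingHom.id_apply] }
  L_mem X n a ha := add_zero n ▸
    ((op₁.isGradedDerivation_L X).tensorDer (op₂.isGradedDerivation_L X)).map_mem ha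
  L_mul X := ((op₁.isGradedDerivation_L X).tensorDer
    (op₂.isGradedDerivation_L X)).leibniz_of_even Even.zero
  L_bracket X Y := by
    have h := tensorDer_superbracket op₂.grading (op₁.isGradedDerivation_L X)
      (op₁.isGradedDerivation_L Y) (op₂.L X) (op₂.L Y)
    simp only [mul_zero, sgn_of_even Even.zero, one_smul, add_zero, ← L_bracket] at h
    exact h.symm
  L_d X := by
    have h := tensorDer_superbracket op₂.grading (op₁.isGradedDerivation_L X)
      op₁.isGradedDerivation_d (op₂.L X) op₂.d
    simp only [zero_mul, sgn_of_even Even.zero, one_smul, L_d, sub_self, tensorDer_zero] at h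
    exact sub_eq_zero.1 h
  I :=
    { toFun X := tensorDer _ _ (-1) (op₁.I X) (op₂.I X)
      map_add' X Y := by rw [map_add, map_add, tensorDer_add]
      map_smul' c X := by rw [map_smul, map_smul, tensorDer_smul, RingHom.id_apply] }
  I_mem X n a ha :=
    ((op₁.isGradedDerivation_I X).tensorDer (op₂.isGradedDerivation_I X)).map_mem ha
  I_mul X n a ha b := by
    have h := ((op₁.isGradedDerivation_I X).tensorDer (op₂.isGradedDerivation_I X)).map_mul ha b
    rwa [neg_one_mul, sgn_neg] at h
  I_I X Y := by
    have h := tensorDer_superbracket op₂.grading (op₁.isGradedDerivation_I X)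
      (op₁.isGradedDerivation_I Y) (op₂.I X) (op₂.I Y)
    simp only [neg_mul_neg, mul_one, sgn_one, neg_smul, one_smul, sub_neg_eq_add, I_I,
      tensorDer_zero] at h
    exact h
  L_I X Y := by
    have h := tensorDer_superbracket op₂.grading (op₁.isGradedDerivation_L X)
      (op₁.isGradedDerivation_I Y) (op₂.L X) (op₂.I Y)
    simp only [zero_mul, sgn_of_even Even.zero, one_smul, zero_add, L_I] at h
    exact h
  cartan X := by
    have h := tensorDer_superbracket op₂.grading (op₁.isGradedDerivation_I X)
      op₁.isGradedDerivation_d (op₂.I X) op₂.d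
    simp only [mul_one, sgn_neg, sgn_one, neg_smul, one_smul, sub_neg_eq_add, cartan,
      neg_add_cancel] at h
    exact h

section Include

variable (op₁ : Operation 𝔤 A) (op₂ : Operation 𝔤 B)

theorem tensor_d_includeLeft (a : A) : (op₁.tensor op₂).d (includeLeft _ _ a) =
    includeLeft op₁.grading op₂.grading (op₁.d a) :=
  tensorDer_includeLeft 1 _ op₂.isGradedDerivation_d.map_one a

theorem tensor_I_includeLeft (X : 𝔤) (a : A) : (op₁.tensor op₂).I X (includeLeft _ _ a) =
    includeLeft op₁.grading op₂.grading (op₁.I X a) :=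
  tensorDer_includeLeft (-1) _ (op₂.isGradedDerivation_I X).map_one a

theorem tensor_L_includeLeft (X : 𝔤) (a : A) : (op₁.tensor op₂).L X (includeLeft _ _ a) =
    includeLeft op₁.grading op₂.grading (op₁.L X a) :=
  tensorDer_includeLeft 0 _ (op₂.isGradedDerivation_L X).map_one a

theorem tensor_I_includeRight (X : 𝔤) (b : B) : (op₁.tensor op₂).I X (includeRight _ _ b) =
    includeRight op₁.grading op₂.grading (op₂.I X b) :=
  tensorDer_includeRight (-1) (op₁.isGradedDerivation_I X).map_one _ b

theorem tensor_L_includeRight (X : 𝔤) (b : B) : (op₁.tensor op₂).L X (includeRight _ _ b) =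
    includeRight op₁.grading op₂.grading (op₂.L X b) :=
  tensorDer_includeRight 0 (op₁.isGradedDerivation_L X).map_one _ b

end Include

/-- The degree-`n` part of the basic subcomplex. -/
def basicPart (op : Operation 𝔤 A) (n : ℤ) : Submodule ℝ A := op.bas ⊓ op.grading n

theorem mem_bas_iff {op : Operation 𝔤 A} {a : A} :
    a ∈ op.bas ↔ (∀ X, op.L X a = 0) ∧ ∀ X, op.I X a = 0 := by
  simp only [bas, inv, hor, Submodule.mem_inf, Submodule.mem_iInf, LinearMap.mem_ker]

theorem d_mem_basicPart (op : Operation 𝔤 A) {n : ℤ} {a : A} (ha : a ∈ op.basicPart n) :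
    op.d a ∈ op.basicPart (n + 1) := by
  obtain ⟨hL, hI⟩ := mem_bas_iff.1 ha.1
  have L_d_apply (X : 𝔤) : op.L X (op.d a) = op.d (op.L X a) := LinearMap.congr_fun (op.L_d X) a
  refine ⟨mem_bas_iff.2 ⟨fun X => ?_, fun X => ?_⟩, op.d_mem ha.2⟩
  · rw [L_d_apply, hL, map_zero]
  · rw [I_d, hL, hI, map_zero, sub_zero]

end Operation

/-- A homomorphism `φ` of graded algebras intertwining operations of `𝔮` and `𝔤` along the Lie
algebra homomorphism `π : 𝔤 → 𝔮`. -/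
structure IsOperationHom (opQ : Operation 𝔮 B) (op : Operation 𝔤 A) (π : 𝔤 →ₗ⁅ℝ⁆ 𝔮)
    (φ : B →ₐ[ℝ] A) : Prop where
  map_mem : ∀ n, ∀ x ∈ opQ.grading n, φ x ∈ op.grading n
  map_d : ∀ x, φ (opQ.d x) = op.d (φ x)
  map_I : ∀ X x, φ (opQ.I (π X) x) = op.I X (φ x)

namespace IsOperationHom

variable {π : 𝔤 →ₗ⁅ℝ⁆ 𝔮} {opQ : Operation 𝔮 B} {op : Operation 𝔤 A} {φ : B →ₐ[ℝ] A}

theorem map_L (hφ : IsOperationHom opQ op π φ) (X : 𝔤) (x : B) :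
    φ (opQ.L (π X) x) = op.L X (φ x) := by
  rw [← opQ.cartan, ← op.cartan]
  simp only [LinearMap.add_apply, LinearMap.comp_apply, map_add, hφ.map_I, hφ.map_d]

theorem tensor {A' B' : Type} [Ring A'] [Algebra ℝ A'] [Ring B'] [Algebra ℝ B']
    {opQ' : Operation 𝔮 B'} {op' : Operation 𝔤 A'} {φ' : B' →ₐ[ℝ] A'}
    (hφ : IsOperationHom opQ op π φ) (hφ' : IsOperationHom opQ' op' π φ') :
    IsOperationHom (opQ.tensor opQ') (op.tensor op') π
      (gradedTensorMap φ φ' hφ.map_mem hφ'.map_mem) where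
  map_mem _ _ := gradedTensorMap_mem _ _
  map_d := gradedTensorMap_tensorDer _ _ 1 hφ.map_d hφ'.map_d
  map_I X := gradedTensorMap_tensorDer _ _ (-1) (hφ.map_I X) (hφ'.map_I X)

theorem comap_basicPart (hφ : IsOperationHom opQ op π φ) (hinj : Function.Injective φ)
    (hπ : Function.Surjective π) (n : ℤ) :
    (op.basicPart n).comap φ.toLinearMap = opQ.basicPart n := by
  ext x
  have zero_iff (y : B) : φ y = 0 ↔ y = 0 := map_eq_zero_iff φ hinj
  have mem_grading_iff : φ x ∈ op.grading n ↔ x ∈ opQ.grading n :=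
    mem_grading_iff_of_injective (φ := φ.toLinearMap) hφ.map_mem hinj
  simp only [Submodule.mem_comap, AlgHom.toLinearMap_apply, Operation.basicPart,
    Submodule.mem_inf, Operation.mem_bas_iff, mem_grading_iff, hπ.forall, ← hφ.map_L, ← hφ.map_I,
    zero_iff]

end IsOperationHom

/-! ### Horizontal projections -/

namespace Operation

variable {J : Type*} (op : Operation 𝔤 A)

/-- The operator `1 - t I_X`, which projects onto the kernel of `I_X` when `I_X t = 1`. -/
def horizontalStep (X : 𝔤) (t : A) : Module.End ℝ A := 1 - LinearMap.mulLeft ℝ t * op.I X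

variable {op}

theorem horizontalStep_apply (X : 𝔤) (t x : A) : op.horizontalStep X t x = x - t * op.I X x := rfl

theorem I_I_apply (X Y : 𝔤) (x : A) : op.I X (op.I Y x) = -op.I Y (op.I X x) :=
  eq_neg_of_add_eq_zero_left (LinearMap.congr_fun (op.I_I X Y) x)

theorem I_I_self (X : 𝔤) (x : A) : op.I X (op.I X x) = 0 :=
  have := IsAddTorsionFree.of_isTorsionFree ℝ A
  self_eq_neg.1 (I_I_apply X X x)

theorem I_mul_of_degree_one {t : A} (ht : t ∈ op.grading 1) (X : 𝔤) (x : A) :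
    op.I X (t * x) = op.I X t * x - t * op.I X x := by
  rw [op.I_mul X ht, sgn_one, neg_one_smul, sub_eq_add_neg]

theorem mul_self_of_degree_one {t : A} (ht : t ∈ op.grading 1) : t * t = 0 := by
  have h := op.supercomm ht ht
  rw [mul_one, sgn_one, neg_one_smul] at h
  have := IsAddTorsionFree.of_isTorsionFree ℝ A
  exact self_eq_neg.1 h

theorem mul_comm_of_degree_one {s t : A} (hs : s ∈ op.grading 1) (ht : t ∈ op.grading 1) :
    s * t = -(t * s) := by
  rw [op.supercomm hs ht, mul_one, sgn_one, neg_one_smul]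

theorem horizontalStep_mem {X : 𝔤} {t : A} (ht : t ∈ op.grading 1) {n : ℤ} {x : A}
    (hx : x ∈ op.grading n) : op.horizontalStep X t x ∈ op.grading n :=
  Submodule.sub_mem _ hx (add_sub_cancel 1 n ▸ op.mul_mem ht (op.I_mem X hx))

theorem I_comp_horizontalStep_self {X : 𝔤} {t : A} (ht : t ∈ op.grading 1) (hX : op.I X t = 1) :
    op.I X * op.horizontalStep X t = 0 := by
  ext x
  rw [Module.End.mul_apply, horizontalStep_apply, map_sub, I_mul_of_degree_one ht, hX, I_I_self,
    mul_zero, sub_zero, one_mul, sub_self, LinearMap.zero_apply]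

theorem commute_I_horizontalStep {X Y : 𝔤} {t : A} (ht : t ∈ op.grading 1) (hY : op.I Y t = 0) :
    Commute (op.I Y) (op.horizontalStep X t) := by
  ext x
  rw [Module.End.mul_apply, Module.End.mul_apply, horizontalStep_apply, horizontalStep_apply,
    map_sub, I_mul_of_degree_one ht, hY, zero_mul, zero_sub, I_I_apply Y X, mul_neg, neg_neg]

theorem horizontalStep_comp_mulLeft_self {X : 𝔤} {t : A} (ht : t ∈ op.grading 1)
    (hX : op.I X t = 1) : op.horizontalStep X t * LinearMap.mulLeft ℝ t = 0 := by
  ext x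
  rw [Module.End.mul_apply, horizontalStep_apply, LinearMap.mulLeft_apply, I_mul_of_degree_one ht,
    hX, one_mul, mul_sub, ← mul_assoc, mul_self_of_degree_one ht, zero_mul, sub_zero, sub_self,
    LinearMap.zero_apply]

theorem commute_mulLeft_horizontalStep {X : 𝔤} {s t : A} (hs : s ∈ op.grading 1)
    (ht : t ∈ op.grading 1) (hX : op.I X s = 0) :
    Commute (LinearMap.mulLeft ℝ s) (op.horizontalStep X t) := by
  ext x
  rw [Module.End.mul_apply, Module.End.mul_apply, horizontalStep_apply, LinearMap.mulLeft_apply,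
    LinearMap.mulLeft_apply, horizontalStep_apply, I_mul_of_degree_one hs, hX, zero_mul, zero_sub,
    mul_neg, sub_neg_eq_add, mul_sub, ← mul_assoc, mul_comm_of_degree_one hs ht, neg_mul,
    sub_neg_eq_add, mul_assoc]

variable (op) in
/-- Degree-one elements `t j` dual to the vectors `X j` under contraction. -/
structure IsDualFamily (X : J → 𝔤) (t : J → A) : Prop where
  mem_grading : ∀ j, t j ∈ op.grading 1
  I_self : ∀ j, op.I (X j) (t j) = 1
  I_of_ne : ∀ {i j}, i ≠ j → op.I (X i) (t j) = 0

namespace IsDualFamily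

variable [Fintype J] {X : J → 𝔤} {t : J → A}

theorem commute_horizontalStep (h : op.IsDualFamily X t) :
    ((Finset.univ : Finset J) : Set J).Pairwise
      (Function.onFun Commute fun j => op.horizontalStep (X j) (t j)) := fun i _ j _ hij =>
  (Commute.one_left _).sub_left <|
    (commute_mulLeft_horizontalStep (h.mem_grading i) (h.mem_grading j)
      (h.I_of_ne hij.symm)).mul_left (commute_I_horizontalStep (h.mem_grading j) (h.I_of_ne hij))

/-- The projection onto the common kernel of the contractions `I (X j)`. -/
def horizontalProj (h : op.IsDualFamily X t) : Module.End ℝ A :=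
  Finset.univ.noncommProd (fun j => op.horizontalStep (X j) (t j)) h.commute_horizontalStep

theorem horizontalProj_induction (h : op.IsDualFamily X t) (p : Module.End ℝ A → Prop)
    (mul : ∀ f g, p f → p g → p (f * g)) (one : p 1)
    (step : ∀ j, p (op.horizontalStep (X j) (t j))) : p h.horizontalProj :=
  Finset.noncommProd_induction _ _ _ p mul one fun j _ => step j

theorem I_comp_horizontalProj (h : op.IsDualFamily X t) (j : J) :
    op.I (X j) * h.horizontalProj = 0 := by
  classical
  rw [horizontalProj, ← Finset.mul_noncommProd_erase _ (Finset.mem_univ j), ← mul_assoc,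
    I_comp_horizontalStep_self (h.mem_grading j) (h.I_self j), zero_mul]

theorem horizontalProj_comp_mulLeft (h : op.IsDualFamily X t) (j : J) :
    h.horizontalProj * LinearMap.mulLeft ℝ (t j) = 0 := by
  classical
  rw [horizontalProj, ← Finset.noncommProd_erase_mul _ (Finset.mem_univ j), mul_assoc,
    horizontalStep_comp_mulLeft_self (h.mem_grading j) (h.I_self j), mul_zero]

theorem horizontalProj_of_horizontal (h : op.IsDualFamily X t) {x : A}
    (hx : ∀ j, op.I (X j) x = 0) : h.horizontalProj x = x :=
  h.horizontalProj_induction (fun f => f x = x)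
    (fun f g hf hg => by rw [Module.End.mul_apply, hg, hf]) rfl
    fun j => by rw [horizontalStep_apply, hx, mul_zero, sub_zero]

theorem horizontalProj_mem_grading (h : op.IsDualFamily X t) {n : ℤ} {x : A}
    (hx : x ∈ op.grading n) : h.horizontalProj x ∈ op.grading n :=
  h.horizontalProj_induction (fun f => ∀ x ∈ op.grading n, f x ∈ op.grading n)
    (fun _ _ hf hg x hx => hf _ (hg x hx)) (fun _ hx => hx)
    (fun j _ hx => horizontalStep_mem (h.mem_grading j) hx) x hx

theorem horizontalProj_mem_subalgebra (h : op.IsDualFamily X t) {F : Subalgebra ℝ A}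
    (ht : ∀ j, t j ∈ F) (hI : ∀ Y, ∀ x ∈ F, op.I Y x ∈ F) {x : A} (hx : x ∈ F) :
    h.horizontalProj x ∈ F :=
  h.horizontalProj_induction (fun f => ∀ x ∈ F, f x ∈ F) (fun _ _ hf hg x hx => hf _ (hg x hx))
    (fun _ hx => hx) (fun j x hx => F.sub_mem hx (F.mul_mem (ht j) (hI (X j) x hx))) x hx

theorem commute_I_horizontalProj (h : op.IsDualFamily X t) {Y : 𝔤} (hY : ∀ j, op.I Y (t j) = 0) :
    Commute (op.I Y) h.horizontalProj :=
  h.horizontalProj_induction (Commute (op.I Y)) (fun _ _ => Commute.mul_right)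
    (Commute.one_right _) fun j => commute_I_horizontalStep (h.mem_grading j) (hY j)

theorem sub_horizontalProj_mem (h : op.IsDualFamily X t) {N : Submodule ℝ A}
    (hN : ∀ j x, t j * x ∈ N) (x : A) : x - h.horizontalProj x ∈ N :=
  h.horizontalProj_induction (fun f => ∀ x, x - f x ∈ N)
    (fun f g hf hg x => by
      rw [Module.End.mul_apply, ← sub_add_sub_cancel x (g x)]
      exact N.add_mem (hg x) (hf (g x)))
    (fun x => by rw [Module.End.one_apply, sub_self]; exact N.zero_mem)
    (fun j x => by rw [horizontalStep_apply, sub_sub_cancel]; exact hN j _) x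

end IsDualFamily

end Operation

/-! ### Homotopies with semisimple Laplacian -/

section Semisimple

open Polynomial

variable {k R : Type*} [Field k] [Ring R] [Algebra k R]

theorem aeval_apply_of_map_eq_zero {M : Type*} [AddCommGroup M] [Module k M] {f : Module.End k M}
    {x : M} (hx : f x = 0) (p : k[X]) : aeval f p x = p.eval 0 • x := by
  obtain ⟨q, hq⟩ : X ∣ p - C (p.eval 0) := X_dvd_iff.2 <| by
    rw [coeff_zero_eq_eval_zero, eval_sub, eval_C, sub_self]
  rw [eq_add_of_sub_eq hq, mul_comm, map_add, map_mul, aeval_X, aeval_C, LinearMap.add_apply,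
    Module.End.mul_apply, hx, map_zero, zero_add, Module.algebraMap_end_apply, eval_add, eval_mul,
    eval_X, mul_zero, eval_C, zero_add]

theorem commute_aeval {S : Type*} [Ring S] [Algebra k S] {g h : S} (hgh : Commute g h) (p : k[X]) :
    Commute g (aeval h p) := by
  rw [aeval_eq_sum_range]
  exact Commute.sum_right _ _ _ fun i _ => (hgh.pow_right i).smul_right _

/-- The subalgebra `F` in degree zero, and the eigenspace of `f` for `-j` in degree `j > 0`. -/
def eigenGrading (f : Module.End k R) (F : Subalgebra k R) : ℕ → Submodule k R
  | 0 => Subalgebra.toSubmodule F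
  | j + 1 => f.eigenspace (-(j + 1 : ℕ))

variable {f : Module.End k R} {F : Subalgebra k R}

theorem map_eq_of_mem_eigenGrading (hF : ∀ x ∈ F, f x = 0) {j : ℕ} {x : R}
    (hx : x ∈ eigenGrading f F j) : f x = (-j : k) • x := by
  cases j with
  | zero => rw [hF x hx, Nat.cast_zero, neg_zero, zero_smul]
  | succ j => exact Module.End.mem_eigenspace_iff.1 hx

theorem mul_mem_eigenGrading (hf : ∀ x y, f (x * y) = f x * y + x * f y)
    (hF : ∀ x ∈ F, f x = 0) {i j : ℕ} {x y : R} (hx : x ∈ eigenGrading f F i)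
    (hy : y ∈ eigenGrading f F j) : x * y ∈ eigenGrading f F (i + j) := by
  obtain h | ⟨l, h⟩ : i + j = 0 ∨ ∃ l, i + j = l + 1 := by cases i + j <;> simp
  · obtain ⟨rfl, rfl⟩ := Nat.add_eq_zero_iff.1 h
    exact F.mul_mem hx hy
  · rw [h]
    refine Module.End.mem_eigenspace_iff.2 ?_
    rw [hf, map_eq_of_mem_eigenGrading hF hx, map_eq_of_mem_eigenGrading hF hy, smul_mul_assoc,
      mul_smul_comm, ← add_smul, ← h, Nat.cast_add, neg_add]

theorem iSup_eigenGrading_eq_top (hf : ∀ x y, f (x * y) = f x * y + x * f y)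
    (hF : ∀ x ∈ F, f x = 0) {s : Set R} (hs : ∀ x ∈ s, f x = -x)
    (htop : F ⊔ Algebra.adjoin k s = ⊤) : ⨆ j, eigenGrading f F j = ⊤ := by
  let S : Subalgebra k R := (⨆ j, eigenGrading f F j).toSubalgebra
    (Submodule.mem_iSup_of_mem 0 F.one_mem) fun x y hx hy => by
      suffices (⨆ j, eigenGrading f F j) * (⨆ j, eigenGrading f F j) ≤ ⨆ j, eigenGrading f F j from
        this (Submodule.mul_mem_mul hx hy)
      simp only [Submodule.iSup_mul, Submodule.mul_iSup, iSup_le_iff]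
      exact fun i j => Submodule.mul_le.2 fun x hx y hy =>
        Submodule.mem_iSup_of_mem _ (mul_mem_eigenGrading hf hF hx hy)
  have hSs : s ⊆ S := fun x hx => Submodule.mem_iSup_of_mem 1 <|
    Module.End.mem_eigenspace_iff.2 <| by
      rw [hs x hx, Nat.zero_add, Nat.cast_one, neg_smul, one_smul]
  have hS : S = ⊤ := top_unique <| htop ▸ sup_le
    (fun x hx => Submodule.mem_iSup_of_mem 0 hx) (Algebra.adjoin_le hSs)
  exact (Submodule.toSubalgebra_toSubmodule _ _ _).symm.trans
    (congrArg Subalgebra.toSubmodule hS |>.trans Algebra.top_toSubmodule)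

theorem exists_aeval_mem_of_adjoin_eq_top [CharZero k] (hf : ∀ x y, f (x * y) = f x * y + x * f y)
    (hF : ∀ x ∈ F, f x = 0) {s : Set R} (hs : ∀ x ∈ s, f x = -x)
    (htop : F ⊔ Algebra.adjoin k s = ⊤) (z : R) :
    ∃ p : k[X], p.eval 0 = 1 ∧ aeval f p z ∈ F := by
  have hz : z ∈ ⨆ j, eigenGrading f F j := iSup_eigenGrading_eq_top hf hF hs htop ▸ trivial
  induction hz using Submodule.iSup_induction' with
  | zero => exact ⟨1, eval_one, by rw [map_zero]; exact F.zero_mem⟩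
  | add x y _ _ ihx ihy =>
    obtain ⟨p, hp, hpx⟩ := ihx
    obtain ⟨q, hq, hqy⟩ := ihy
    refine ⟨p * q, by rw [eval_mul, hp, hq, one_mul], ?_⟩
    have hpqx : aeval f (p * q) x = aeval f p x := by
      rw [mul_comm, map_mul, Module.End.mul_apply, aeval_apply_of_map_eq_zero (hF _ hpx), hq,
        one_smul]
    have hpqy : aeval f (p * q) y = aeval f q y := by
      rw [map_mul, Module.End.mul_apply, aeval_apply_of_map_eq_zero (hF _ hqy), hp, one_smul]
    rw [map_add, hpqx, hpqy]
    exact F.add_mem hpx hqy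
  | mem j x hx =>
    cases j with
    | zero => exact ⟨1, eval_one, by rwa [map_one]⟩
    | succ j =>
      have hj : ((j + 1 : ℕ) : k) ≠ 0 := Nat.cast_ne_zero.2 j.succ_ne_zero
      refine ⟨1 + C ((j + 1 : ℕ) : k)⁻¹ * X, by simp, ?_⟩
      rw [map_add, map_one, map_mul, aeval_C, aeval_X, LinearMap.add_apply, Module.End.one_apply,
        Module.End.mul_apply, map_eq_of_mem_eigenGrading hF hx, map_smul,
        Module.algebraMap_end_apply, smul_smul, neg_mul, mul_inv_cancel₀ hj, neg_smul, one_smul,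
        add_neg_cancel]
      exact F.zero_mem

end Semisimple

section Cohomology

open Polynomial

variable {C C' : Type} [AddCommGroup C] [Module ℝ C] [AddCommGroup C'] [Module ℝ C']
  {d : Module.End ℝ C} {d' : Module.End ℝ C'} {P : ℤ → Submodule ℝ C} {K : Module.End ℝ C}

/-- The induced map on cohomology of an inclusion of complexes. -/
def gradedCohMap (P : ℤ → Submodule ℝ C) (φ : C' →ₗ[ℝ] C) (hd : ∀ x, φ (d' x) = d (φ x)) (n : ℤ) :
    gradedCoh d' (fun m => (P m).comap φ) n →ₗ[ℝ] gradedCoh d P n :=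
  Submodule.mapQ _ _
    (φ.restrict fun x hx => ⟨hx.1, LinearMap.mem_ker.2 <| by
      rw [← hd, LinearMap.mem_ker.1 hx.2, map_zero]⟩)
    fun _ ⟨w, hw, hwx⟩ => ⟨φ w, hw, (hd w).symm.trans (congrArg φ hwx)⟩

variable {φ : C' →ₗ[ℝ] C} {n : ℤ}

theorem commute_d_laplacian (hdd : d * d = 0) : Commute d (d * K + K * d) := by
  rw [commute_iff_eq, mul_add, add_mul, ← mul_assoc, hdd, mul_assoc K d d, hdd, zero_mul, mul_zero,
    zero_add, add_zero, mul_assoc]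

theorem aeval_laplacian_mem (hP : ∀ m, ∀ x ∈ P m, d x ∈ P (m + 1))
    (hK : ∀ m, ∀ x ∈ P m, K x ∈ P (m - 1)) (p : ℝ[X]) {z : C} (hz : z ∈ P n) :
    aeval (d * K + K * d) p z ∈ P n := by
  have laplacian_mem : ∀ x ∈ P n, (d * K + K * d) x ∈ P n := fun x hx => (P n).add_mem
    (sub_add_cancel n 1 ▸ hP _ _ (hK _ _ hx)) (add_sub_cancel_right n 1 ▸ hK _ _ (hP _ _ hx))
  rw [aeval_eq_sum_range, LinearMap.sum_apply]
  refine Submodule.sum_mem _ fun i _ => (P n).smul_mem _ ?_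
  rw [Module.End.pow_apply]
  exact Set.MapsTo.iterate laplacian_mem i hz

theorem exists_aeval_laplacian_eq_add (hdd : d * d = 0) (hP : ∀ m, ∀ x ∈ P m, d x ∈ P (m + 1))
    (hK : ∀ m, ∀ x ∈ P m, K x ∈ P (m - 1)) {p : ℝ[X]} (hp : p.eval 0 = 1) {z : C} (hz : z ∈ P n)
    (hdz : d z = 0) : ∃ w ∈ P (n - 1), aeval (d * K + K * d) p z = d w + z := by
  obtain ⟨q, hq⟩ : X ∣ p - 1 := X_dvd_iff.2 <| by
    rw [coeff_zero_eq_eval_zero, eval_sub, hp, eval_one, sub_self]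
  refine ⟨K (aeval (d * K + K * d) q z), hK _ _ (aeval_laplacian_mem hP hK q hz), ?_⟩
  have d_aeval : d (aeval (d * K + K * d) q z) = 0 := by
    rw [← Module.End.mul_apply, (commute_aeval (commute_d_laplacian hdd) q).eq,
      Module.End.mul_apply, hdz, map_zero]
  rw [eq_add_of_sub_eq hq, map_add, map_mul, aeval_X, map_one, LinearMap.add_apply,
    Module.End.mul_apply, LinearMap.add_apply, Module.End.mul_apply, Module.End.mul_apply, d_aeval,
    map_zero, add_zero, Module.End.one_apply]

theorem gradedCohMap_bijective (hinj : Function.Injective φ) (hd : ∀ x, φ (d' x) = d (φ x))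
    (hdd : d * d = 0) (hP : ∀ m, ∀ x ∈ P m, d x ∈ P (m + 1))
    (hK : ∀ m, ∀ x ∈ P m, K x ∈ P (m - 1)) (hφ : ∀ x, (d * K + K * d) (φ x) = 0)
    (hpoly : ∀ m, ∀ z ∈ P m,
      ∃ p : ℝ[X], p.eval 0 = 1 ∧ aeval (d * K + K * d) p z ∈ LinearMap.range φ) :
    Function.Bijective (gradedCohMap P φ hd n) := by
  constructor
  · refine (injective_iff_map_eq_zero _).2 fun c hc => ?_
    obtain ⟨⟨x, hx, hdx⟩, rfl⟩ := Submodule.Quotient.mk_surjective _ c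
    obtain ⟨w, hw, hdw⟩ := (Submodule.Quotient.mk_eq_zero _).1 hc
    obtain ⟨p, hp, w', hw'⟩ := hpoly _ w hw
    refine (Submodule.Quotient.mk_eq_zero _).2 ⟨w', ?_, hinj ?_⟩
    · exact Submodule.mem_comap.2 (hw' ▸ aeval_laplacian_mem hP hK p hw)
    · calc φ (d' w') = aeval (d * K + K * d) p (d w) := by
            rw [hd, hw', ← Module.End.mul_apply, (commute_aeval (commute_d_laplacian hdd) p).eq,
              Module.End.mul_apply]
        _ = aeval (d * K + K * d) p (φ x) := congrArg _ hdw
        _ = φ x := by rw [aeval_apply_of_map_eq_zero (hφ x), hp, one_smul]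
  · intro c
    obtain ⟨⟨z, hz, hdz⟩, rfl⟩ := Submodule.Quotient.mk_surjective _ c
    obtain ⟨p, hp, x, hx⟩ := hpoly _ z hz
    obtain ⟨w, hw, hzw⟩ := exists_aeval_laplacian_eq_add hdd hP hK hp hz hdz
    have d_x : d' x = 0 := hinj <| by
      rw [hd, hx, hzw, map_add, LinearMap.mem_ker.1 hdz, ← Module.End.mul_apply, hdd, map_zero,
        LinearMap.zero_apply, add_zero]
    have hx_mem : φ x ∈ P n := hx ▸ aeval_laplacian_mem hP hK p hz
    refine ⟨Submodule.Quotient.mk ⟨x, hx_mem, d_x⟩, (Submodule.Quotient.eq _).2 ⟨w, hw, ?_⟩⟩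
    exact eq_sub_of_add_eq (hzw.symm.trans hx.symm)

end Cohomology

/-! ### The homotopy of a basic reduction -/

theorem sum_coord_comp_apply {k V M J : Type*} [CommRing k] [AddCommGroup V] [Module k V]
    [AddCommGroup M] [Module k M] [Fintype J] (e : Module.Basis J k V)
    (f : Module.Dual k V →ₗ[k] V →ₗ[k] M) (T : V →ₗ[k] V) :
    ∑ j, f (e.coord j ∘ₗ T) (e j) = ∑ j, f (e.coord j) (T (e j)) := by
  classical
  have expand_dual (j : J) : e.coord j ∘ₗ T = ∑ i, e.coord j (T (e i)) • e.coord i :=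
    (e.sum_dual_apply_smul_coord (e.coord j ∘ₗ T)).symm
  have expand_vec (j : J) : T (e j) = ∑ i, e.coord i (T (e j)) • e i := (e.sum_repr _).symm
  calc ∑ j, f (e.coord j ∘ₗ T) (e j)
      = ∑ j, ∑ i, e.coord j (T (e i)) • f (e.coord i) (e j) := by
        simp only [fun j => congrArg f (expand_dual j), map_sum, map_smul, LinearMap.sum_apply,
          LinearMap.smul_apply]
    _ = ∑ i, ∑ j, e.coord j (T (e i)) • f (e.coord i) (e j) := Finset.sum_comm
    _ = ∑ i, f (e.coord i) (T (e i)) := by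
        refine Finset.sum_congr rfl fun i _ => ?_
        rw [congrArg (f (e.coord i)) (expand_vec i), map_sum]
        simp only [map_smul]

/-- An equivariant connection `θ` on an operation, together with the partial derivatives `pd X` of
the algebra along the curvature, as they exist on the Weil algebra. -/
structure CurvatureDerivation (op : Operation 𝔤 A) where
  θ : Module.Dual ℝ 𝔤 →ₗ[ℝ] A
  θ_mem : ∀ γ, θ γ ∈ op.grading 1
  I_θ : ∀ X γ, op.I X (θ γ) = γ X • (1 : A)
  L_θ : ∀ X γ, op.L X (θ γ) = -θ (γ ∘ₗ LieAlgebra.ad ℝ 𝔤 X)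
  pd : 𝔤 →ₗ[ℝ] Module.End ℝ A
  isGradedDerivation_pd : ∀ X, IsGradedDerivation op.grading (-2) (pd X)
  pd_θ : ∀ X γ, pd X (θ γ) = 0
  pd_d_θ : ∀ X γ, pd X (op.d (θ γ)) = γ X • (1 : A)
  commute_I_pd : ∀ X Y, Commute (op.I X) (pd Y)
  L_pd : ∀ X Y, op.L X * pd Y - pd Y * op.L X = pd ⁅X, Y⁆

namespace CurvatureDerivation

variable {op : Operation 𝔤 A} (c : CurvatureDerivation op)

theorem isDualFamily {J : Type*} {X : J → 𝔤} {γ : J → Module.Dual ℝ 𝔤} (hself : ∀ j, γ j (X j) = 1)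
    (hne : ∀ {i j}, i ≠ j → γ j (X i) = 0) : op.IsDualFamily X fun j => c.θ (γ j) where
  mem_grading j := c.θ_mem _
  I_self j := by rw [c.I_θ, hself, one_smul]
  I_of_ne hij := by rw [c.I_θ, hne hij, zero_smul]

/-- The ideal generated by the connection forms. -/
def vertical : Submodule ℝ A := ⨆ γ, LinearMap.range (LinearMap.mulLeft ℝ (c.θ γ))

theorem θ_mul_mem_vertical (γ : Module.Dual ℝ 𝔤) (x : A) : c.θ γ * x ∈ c.vertical :=
  Submodule.mem_iSup_of_mem γ ⟨x, rfl⟩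

theorem L_mem_vertical (Y : 𝔤) {x : A} (hx : x ∈ c.vertical) : op.L Y x ∈ c.vertical := by
  suffices c.vertical ≤ c.vertical.comap (op.L Y) from this hx
  refine iSup_le fun γ => ?_
  rintro _ ⟨x, rfl⟩
  rw [Submodule.mem_comap, LinearMap.mulLeft_apply, op.L_mul, c.L_θ, neg_mul]
  exact Submodule.add_mem _ (Submodule.neg_mem _ (c.θ_mul_mem_vertical _ _))
    (c.θ_mul_mem_vertical _ _)

variable [FiniteDimensional ℝ 𝔤]

theorem isDualFamily_finBasis : op.IsDualFamily (Module.finBasis ℝ 𝔤)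
    fun j => c.θ ((Module.finBasis ℝ 𝔤).coord j) :=
  c.isDualFamily (fun j => by simp) fun hij => by simp [Finsupp.single_eq_of_ne' hij]

/-- The projection onto the horizontal elements along the ideal generated by the connection. -/
def horizontalProj : Module.End ℝ A := c.isDualFamily_finBasis.horizontalProj

theorem I_horizontalProj (Y : 𝔤) (x : A) : op.I Y (c.horizontalProj x) = 0 := by
  have h : op.I.flip (c.horizontalProj x) = 0 := (Module.finBasis ℝ 𝔤).ext fun j =>
    LinearMap.congr_fun (c.isDualFamily_finBasis.I_comp_horizontalProj j) x
  exact LinearMap.congr_fun h Y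

theorem horizontalProj_of_horizontal {x : A} (hx : ∀ Y, op.I Y x = 0) : c.horizontalProj x = x :=
  c.isDualFamily_finBasis.horizontalProj_of_horizontal fun _ => hx _

theorem horizontalProj_of_mem_vertical {x : A} (hx : x ∈ c.vertical) : c.horizontalProj x = 0 := by
  suffices c.vertical ≤ LinearMap.ker c.horizontalProj from this hx
  refine iSup_le fun γ => ?_
  rintro _ ⟨x, rfl⟩
  rw [LinearMap.mem_ker, LinearMap.mulLeft_apply,
    ← (Module.finBasis ℝ 𝔤).sum_dual_apply_smul_coord γ]
  simp only [map_sum, map_smul, Finset.sum_mul, smul_mul_assoc]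
  refine Finset.sum_eq_zero fun j _ => ?_
  rw [← LinearMap.mulLeft_apply ℝ, ← Module.End.mul_apply, horizontalProj,
    c.isDualFamily_finBasis.horizontalProj_comp_mulLeft j, LinearMap.zero_apply, smul_zero]

theorem horizontalProj_eq_of_sub_mem_vertical {x y : A} (hxy : x - y ∈ c.vertical)
    (hy : ∀ Y, op.I Y y = 0) : c.horizontalProj x = y := by
  rw [← sub_add_cancel x y, map_add, c.horizontalProj_of_mem_vertical hxy, zero_add,
    c.horizontalProj_of_horizontal hy]

theorem L_horizontalProj (Y : 𝔤) (x : A) :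
    op.L Y (c.horizontalProj x) = c.horizontalProj (op.L Y x) := by
  refine (c.horizontalProj_eq_of_sub_mem_vertical ?_ fun X => ?_).symm
  · rw [← map_sub]
    exact c.L_mem_vertical Y <| c.isDualFamily_finBasis.sub_horizontalProj_mem
      (fun _ _ => c.θ_mul_mem_vertical _ _) x
  · have h := LinearMap.congr_fun (op.L_I Y X) (c.horizontalProj x)
    simpa only [LinearMap.sub_apply, LinearMap.comp_apply, c.I_horizontalProj, map_zero, zero_sub,
      neg_eq_zero] using h

end CurvatureDerivation

/-- A subalgebra `F` on which the partial derivatives along the ideal `𝔫` vanish, which contains an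
`𝔫`-connection `τ` and generates the algebra together with the connection `c.θ`. -/
structure NormalReduction {op : Operation 𝔤 A} (c : CurvatureDerivation op) (𝔫 : Submodule ℝ 𝔤)
    (hn : ∀ Y : 𝔤, ∀ x ∈ 𝔫, ⁅Y, x⁆ ∈ 𝔫) where
  F : Subalgebra ℝ A
  d_mem : ∀ x ∈ F, op.d x ∈ F
  I_mem : ∀ X, ∀ x ∈ F, op.I X x ∈ F
  pd_eq_zero : ∀ X ∈ 𝔫, ∀ x ∈ F, c.pd X x = 0
  θ_mem : ∀ γ ∈ 𝔫.dualAnnihilator, c.θ γ ∈ F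
  sup_adjoin_eq_top : F ⊔ Algebra.adjoin ℝ (Set.range c.θ ∪ Set.range (op.d ∘ c.θ)) = ⊤
  τ : Module.Dual ℝ 𝔫 →ₗ[ℝ] A
  τ_mem : ∀ α, τ α ∈ F
  τ_mem_grading : ∀ α, τ α ∈ op.grading 1
  I_τ : ∀ (X : 𝔫) α, op.I X (τ α) = α X • (1 : A)
  L_τ : ∀ Y α, op.L Y (τ α) = -τ (α ∘ₗ adRes 𝔫 hn Y)

namespace NormalReduction

variable {op : Operation 𝔤 A} {c : CurvatureDerivation op} {𝔫 : Submodule ℝ 𝔤}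
  {hn : ∀ Y : 𝔤, ∀ x ∈ 𝔫, ⁅Y, x⁆ ∈ 𝔫} [FiniteDimensional ℝ 𝔤] (r : NormalReduction c 𝔫 hn)

/-- The horizontal part of the connection `τ`: the difference of `τ` and `c.θ` on `𝔫`, extended to
a `𝔤`-horizontal form. -/
def δ : Module.Dual ℝ 𝔫 →ₗ[ℝ] A := c.horizontalProj ∘ₗ r.τ

theorem δ_mem (α : Module.Dual ℝ 𝔫) : r.δ α ∈ op.grading 1 :=
  c.isDualFamily_finBasis.horizontalProj_mem_grading (r.τ_mem_grading α)

theorem I_δ (Y : 𝔤) (α : Module.Dual ℝ 𝔫) : op.I Y (r.δ α) = 0 := c.I_horizontalProj Y _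

theorem L_δ (Y : 𝔤) (α : Module.Dual ℝ 𝔫) : op.L Y (r.δ α) = -r.δ (α ∘ₗ adRes 𝔫 hn Y) := by
  rw [δ, LinearMap.comp_apply, c.L_horizontalProj, r.L_τ, map_neg, LinearMap.comp_apply]

section Complement

variable {𝔪 : Submodule ℝ 𝔤} (h : IsCompl 𝔫 𝔪)

theorem isDualFamily_complement : op.IsDualFamily (fun j => (Module.finBasis ℝ 𝔪 j : 𝔤))
    fun j => c.θ ((Module.finBasis ℝ 𝔪).coord j ∘ₗ 𝔪.projectionOnto 𝔫 h.symm) :=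
  c.isDualFamily (fun j => by simp) fun hij => by simp [Finsupp.single_eq_of_ne' hij]

theorem I_horizontalProj_τ (Y : 𝔤) (α : Module.Dual ℝ 𝔫) :
    op.I Y ((isDualFamily_complement (c := c) h).horizontalProj (r.τ α)) =
      α (𝔫.projectionOnto 𝔪 h Y) • (1 : A) := by
  set P := (isDualFamily_complement (c := c) h).horizontalProj
  have I_of_mem (X : 𝔫) : op.I X (P (r.τ α)) = α X • (1 : A) := by
    have hX : Commute (op.I X) P := Operation.IsDualFamily.commute_I_horizontalProj _ fun j => by
      rw [c.I_θ, LinearMap.comp_apply, Submodule.projectionOnto_apply_right, map_zero, zero_smul]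
    have P_one : P 1 = 1 := Operation.IsDualFamily.horizontalProj_of_horizontal _ fun j =>
      (op.isGradedDerivation_I _).map_one
    rw [← Module.End.mul_apply, hX.eq, Module.End.mul_apply, r.I_τ, map_smul, P_one]
  have I_of_mem_complement (X : 𝔪) : op.I X (P (r.τ α)) = 0 := by
    have hzero : op.I.flip (P (r.τ α)) ∘ₗ 𝔪.subtype = 0 := (Module.finBasis ℝ 𝔪).ext fun j =>
      LinearMap.congr_fun ((isDualFamily_complement h).I_comp_horizontalProj j) _
    exact LinearMap.congr_fun hzero X
  conv_lhs => rw [← Submodule.projection_add_projection_eq_self h Y]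
  rw [map_add, LinearMap.add_apply, Submodule.projection_apply, Submodule.projection_apply,
    I_of_mem, I_of_mem_complement, add_zero]

theorem δ_add_θ_mem (α : Module.Dual ℝ 𝔫) :
    r.δ α + c.θ (α ∘ₗ 𝔫.projectionOnto 𝔪 h) ∈ r.F := by
  set y := (isDualFamily_complement (c := c) h).horizontalProj (r.τ α) with hy
  have y_mem : y ∈ r.F := Operation.IsDualFamily.horizontalProj_mem_subalgebra _
    (fun j => r.θ_mem _ <| (Submodule.mem_dualAnnihilator _).2 fun X hX => by
      rw [LinearMap.comp_apply, (𝔪.projectionOnto_apply_eq_zero_iff h.symm).2 hX, map_zero])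
    r.I_mem (r.τ_mem α)
  have sub_mem : r.τ α - (y - c.θ (α ∘ₗ 𝔫.projectionOnto 𝔪 h)) ∈ c.vertical := by
    rw [← sub_add]
    exact Submodule.add_mem _ (Operation.IsDualFamily.sub_horizontalProj_mem _
      (fun _ _ => c.θ_mul_mem_vertical _ _) _) (mul_one (c.θ _) ▸ c.θ_mul_mem_vertical _ 1)
  have δ_eq : r.δ α = y - c.θ (α ∘ₗ 𝔫.projectionOnto 𝔪 h) :=
    c.horizontalProj_eq_of_sub_mem_vertical sub_mem fun Y => by
      rw [map_sub, hy, r.I_horizontalProj_τ h, c.I_θ, LinearMap.comp_apply, sub_self]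
  rwa [δ_eq, sub_add_cancel]

end Complement

theorem θ_add_δ_mem (γ : Module.Dual ℝ 𝔤) : c.θ γ + r.δ (γ ∘ₗ 𝔫.subtype) ∈ r.F := by
  obtain ⟨𝔪, h⟩ := 𝔫.exists_isCompl
  have annihilates : γ - (γ ∘ₗ 𝔫.subtype) ∘ₗ 𝔫.projectionOnto 𝔪 h ∈ 𝔫.dualAnnihilator :=
    (Submodule.mem_dualAnnihilator _).2 fun X hX => by
      rw [LinearMap.sub_apply, LinearMap.comp_apply, LinearMap.comp_apply,
        Submodule.projectionOnto_apply_of_mem_left h hX, Submodule.subtype_apply, sub_self]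
  have hmem := r.F.add_mem (r.θ_mem _ annihilates) (r.δ_add_θ_mem h (γ ∘ₗ 𝔫.subtype))
  rwa [map_sub, sub_add_add_cancel] at hmem

theorem pd_δ {X : 𝔤} (hX : X ∈ 𝔫) (α : Module.Dual ℝ 𝔫) : c.pd X (r.δ α) = 0 := by
  obtain ⟨𝔪, h⟩ := 𝔫.exists_isCompl
  have hmem := r.pd_eq_zero X hX _ (r.δ_add_θ_mem h α)
  rwa [map_add, c.pd_θ, add_zero] at hmem

/-- The homotopy operator `∑ δ(eʲ) ∂/∂Ω(eⱼ)`, where `e` is a basis of `𝔫`. -/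
def homotopy : Module.End ℝ A :=
  ∑ j, LinearMap.mulLeft ℝ (r.δ ((Module.finBasis ℝ 𝔫).coord j)) * c.pd (Module.finBasis ℝ 𝔫 j)

theorem homotopy_apply (x : A) : r.homotopy x =
    ∑ j, r.δ ((Module.finBasis ℝ 𝔫).coord j) * c.pd (Module.finBasis ℝ 𝔫 j) x := by
  simp only [homotopy, LinearMap.sum_apply, Module.End.mul_apply, LinearMap.mulLeft_apply]

theorem isGradedDerivation_homotopy : IsGradedDerivation op.grading (-1) r.homotopy :=
  .sum fun _ _ => .mulLeft_comp op.supercomm (r.δ_mem _) (c.isGradedDerivation_pd _)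

theorem homotopy_eq_zero_of_pd {x : A} (hx : ∀ X ∈ 𝔫, c.pd X x = 0) : r.homotopy x = 0 := by
  rw [homotopy_apply]
  exact Finset.sum_eq_zero fun j _ => by rw [hx _ (Submodule.coe_mem _), mul_zero]

theorem homotopy_of_mem {x : A} (hx : x ∈ r.F) : r.homotopy x = 0 :=
  r.homotopy_eq_zero_of_pd fun X hX => r.pd_eq_zero X hX x hx

theorem homotopy_δ (α : Module.Dual ℝ 𝔫) : r.homotopy (r.δ α) = 0 :=
  r.homotopy_eq_zero_of_pd fun _ hX => r.pd_δ hX α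

theorem homotopy_d_θ (γ : Module.Dual ℝ 𝔤) :
    r.homotopy (op.d (c.θ γ)) = r.δ (γ ∘ₗ 𝔫.subtype) := by
  rw [homotopy_apply, ← (Module.finBasis ℝ 𝔫).sum_dual_apply_smul_coord (γ ∘ₗ 𝔫.subtype), map_sum]
  simp only [c.pd_d_θ, mul_smul_comm, mul_one, map_smul, LinearMap.comp_apply,
    Submodule.subtype_apply]

theorem homotopy_d_δ (α : Module.Dual ℝ 𝔫) : r.homotopy (op.d (r.δ α)) = -r.δ α := by
  obtain ⟨𝔪, h⟩ := 𝔫.exists_isCompl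
  have hmem := r.homotopy_of_mem (r.d_mem _ (r.δ_add_θ_mem h α))
  have hα : (α ∘ₗ 𝔫.projectionOnto 𝔪 h) ∘ₗ 𝔫.subtype = α := by
    rw [LinearMap.comp_assoc, Submodule.projectionOnto_comp_subtype, LinearMap.comp_id]
  rw [map_add, map_add, homotopy_d_θ, hα] at hmem
  exact eq_neg_of_add_eq_zero_left hmem

theorem I_homotopy (Y : 𝔤) (x : A) : op.I Y (r.homotopy x) = -r.homotopy (op.I Y x) := by
  rw [homotopy_apply, homotopy_apply, map_sum, ← Finset.sum_neg_distrib]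
  refine Finset.sum_congr rfl fun j _ => ?_
  rw [Operation.I_mul_of_degree_one (r.δ_mem _), r.I_δ, zero_mul, zero_sub,
    ← Module.End.mul_apply (op.I Y), (c.commute_I_pd Y _).eq, Module.End.mul_apply]

theorem L_homotopy (Y : 𝔤) (x : A) : op.L Y (r.homotopy x) = r.homotopy (op.L Y x) := by
  let e := Module.finBasis ℝ 𝔫
  have homotopy_eq (y : A) : r.homotopy y = ∑ j, r.δ (e.coord j) * c.pd (e j) y :=
    r.homotopy_apply y
  have L_pd_apply (j) : op.L Y (c.pd (e j) x) =
      c.pd (e j) (op.L Y x) + c.pd (adRes 𝔫 hn Y (e j)) x :=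
    eq_add_of_sub_eq' (LinearMap.congr_fun (c.L_pd Y (e j)) x)
  have duality : ∑ j, r.δ (e.coord j ∘ₗ adRes 𝔫 hn Y) * c.pd (e j) x =
      ∑ j, r.δ (e.coord j) * c.pd (adRes 𝔫 hn Y (e j)) x :=
    sum_coord_comp_apply e ((LinearMap.mul ℝ A).compl₁₂ r.δ (c.pd.flip x ∘ₗ 𝔫.subtype)) _
  simp only [homotopy_eq, map_sum, op.L_mul, r.L_δ, L_pd_apply, neg_mul, mul_add,
    Finset.sum_add_distrib, Finset.sum_neg_distrib]
  rw [duality, add_comm (∑ j, _ * c.pd (e j) (op.L Y x)), neg_add_cancel_left]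

theorem homotopy_mem_basicPart {n : ℤ} {x : A} (hx : x ∈ op.basicPart n) :
    r.homotopy x ∈ op.basicPart (n - 1) := by
  obtain ⟨hL, hI⟩ := Operation.mem_bas_iff.1 hx.1
  refine ⟨Operation.mem_bas_iff.2 ⟨fun X => ?_, fun X => ?_⟩,
    r.isGradedDerivation_homotopy.map_mem hx.2⟩
  · rw [L_homotopy, hL, map_zero]
  · rw [I_homotopy, hI, map_zero, neg_zero]

/-- The Laplacian `dK + Kd` of the homotopy operator `K`. -/
def laplacian : Module.End ℝ A := op.d * r.homotopy + r.homotopy * op.d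

theorem laplacian_apply (x : A) :
    r.laplacian x = op.d (r.homotopy x) + r.homotopy (op.d x) := rfl

theorem laplacian_of_mem {x : A} (hx : x ∈ r.F) : r.laplacian x = 0 := by
  rw [laplacian_apply, r.homotopy_of_mem hx, r.homotopy_of_mem (r.d_mem x hx), map_zero, add_zero]

theorem laplacian_δ (α : Module.Dual ℝ 𝔫) : r.laplacian (r.δ α) = -r.δ α := by
  rw [laplacian_apply, homotopy_δ, homotopy_d_δ, map_zero, zero_add]

theorem laplacian_d (x : A) : r.laplacian (op.d x) = op.d (r.laplacian x) := by
  rw [laplacian_apply, laplacian_apply, map_add, op.d_d, op.d_d, map_zero, add_zero, zero_add]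

theorem laplacian_mul (x y : A) :
    r.laplacian (x * y) = r.laplacian x * y + x * r.laplacian y := by
  have h := op.isGradedDerivation_d.superbracket r.isGradedDerivation_homotopy
  rw [mul_neg_one, sgn_neg, sgn_one, neg_one_smul, sub_neg_eq_add] at h
  exact h.leibniz_of_even Even.zero x y

theorem sup_adjoin_δ_eq_top :
    r.F ⊔ Algebra.adjoin ℝ (Set.range r.δ ∪ Set.range (op.d ∘ r.δ)) = ⊤ := by
  set S := r.F ⊔ Algebra.adjoin ℝ (Set.range r.δ ∪ Set.range (op.d ∘ r.δ))
  have F_le : r.F ≤ S := le_sup_left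
  have adjoin_le : Algebra.adjoin ℝ (Set.range r.δ ∪ Set.range (op.d ∘ r.δ)) ≤ S := le_sup_right
  refine top_unique (r.sup_adjoin_eq_top ▸ sup_le F_le (Algebra.adjoin_le ?_))
  rintro _ (⟨γ, rfl⟩ | ⟨γ, rfl⟩)
  · rw [← add_sub_cancel_right (c.θ γ) (r.δ (γ ∘ₗ 𝔫.subtype))]
    exact S.sub_mem (F_le (r.θ_add_δ_mem γ))
      (adjoin_le (Algebra.subset_adjoin (Or.inl ⟨_, rfl⟩)))
  · rw [Function.comp_apply, ← add_sub_cancel_right (c.θ γ) (r.δ (γ ∘ₗ 𝔫.subtype)), map_sub]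
    exact S.sub_mem (F_le (r.d_mem _ (r.θ_add_δ_mem γ)))
      (adjoin_le (Algebra.subset_adjoin (Or.inr ⟨_, rfl⟩)))

theorem exists_aeval_laplacian_mem (z : A) :
    ∃ p : Polynomial ℝ, p.eval 0 = 1 ∧ Polynomial.aeval r.laplacian p z ∈ r.F := by
  refine exists_aeval_mem_of_adjoin_eq_top r.laplacian_mul (fun _ => r.laplacian_of_mem) ?_
    r.sup_adjoin_δ_eq_top z
  rintro _ (⟨α, rfl⟩ | ⟨α, rfl⟩)
  · exact r.laplacian_δ α
  · rw [Function.comp_apply, laplacian_d, laplacian_δ, map_neg]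

theorem gradedCohMap_bijective {C : Type} [AddCommGroup C] [Module ℝ C] {d : Module.End ℝ C}
    {φ : C →ₗ[ℝ] A} (hinj : Function.Injective φ) (hd : ∀ x, φ (d x) = op.d (φ x))
    (hF : ∀ x, φ x ∈ r.F) (hbas : ∀ z ∈ op.bas, z ∈ r.F → z ∈ LinearMap.range φ) (n : ℤ) :
    Function.Bijective (gradedCohMap op.basicPart φ hd n) := by
  refine _root_.gradedCohMap_bijective hinj hd op.d_sq (fun _ _ => op.d_mem_basicPart)
    (fun _ _ => r.homotopy_mem_basicPart) (fun x => r.laplacian_of_mem (hF x)) fun m z hz => ?_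
  obtain ⟨p, hp, hpz⟩ := r.exists_aeval_laplacian_mem z
  have basic : Polynomial.aeval r.laplacian p z ∈ op.basicPart m := aeval_laplacian_mem
    (fun _ _ => op.d_mem_basicPart) (fun _ _ => r.homotopy_mem_basicPart) p hz
  exact ⟨p, hp, hbas _ basic.1 hpz⟩

end NormalReduction

namespace CurvatureDerivation

open GradedTensorProduct

/-- The extension of connection and partial derivatives from the first factor to a tensor
product. -/
def tensor {op₁ : Operation 𝔤 A} (c : CurvatureDerivation op₁) (op₂ : Operation 𝔤 B) :
    CurvatureDerivation (op₁.tensor op₂) where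
  θ := (includeLeft op₁.grading op₂.grading).toLinearMap ∘ₗ c.θ
  θ_mem γ := includeLeft_mem_totalGrading (c.θ_mem γ)
  I_θ X γ := by
    rw [LinearMap.comp_apply, AlgHom.toLinearMap_apply, op₁.tensor_I_includeLeft op₂, c.I_θ,
      map_smul, map_one]
  L_θ X γ := by
    rw [LinearMap.comp_apply, AlgHom.toLinearMap_apply, op₁.tensor_L_includeLeft op₂, c.L_θ,
      map_neg, LinearMap.comp_apply, AlgHom.toLinearMap_apply]
  pd :=
    { toFun X := tensorDer _ _ (-2) (c.pd X) 0
      map_add' X Y := by rw [← tensorDer_add, add_zero, map_add]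
      map_smul' t X := by rw [map_smul, RingHom.id_apply, ← tensorDer_smul, smul_zero] }
  isGradedDerivation_pd X := (c.isGradedDerivation_pd X).tensorDer .zero
  pd_θ X γ := by
    have h := tensorDer_includeLeft (𝒜 := op₁.grading) (ℬ := op₂.grading) (-2) (c.pd X)
      (g := 0) rfl (c.θ γ)
    rw [c.pd_θ, map_zero] at h
    exact h
  pd_d_θ X γ := by
    have h := tensorDer_includeLeft (𝒜 := op₁.grading) (ℬ := op₂.grading) (-2) (c.pd X)
      (g := 0) rfl (op₁.d (c.θ γ))
    rw [c.pd_d_θ, map_smul, map_one, ← op₁.tensor_d_includeLeft op₂] at h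
    exact h
  commute_I_pd X Y := by
    have h := tensorDer_superbracket op₂.grading (op₁.isGradedDerivation_I X)
      (c.isGradedDerivation_pd Y) (op₂.I X) 0
    have hc : op₁.I X ∘ₗ c.pd Y = c.pd Y ∘ₗ op₁.I X := c.commute_I_pd X Y
    have hsgn : sgn (-1 * -2) = 1 := by decide
    simp only [hsgn, one_smul, hc, sub_self, LinearMap.comp_zero, LinearMap.zero_comp,
      tensorDer_zero] at h
    exact sub_eq_zero.1 h
  L_pd X Y := by
    have h := tensorDer_superbracket op₂.grading (op₁.isGradedDerivation_L X)
      (c.isGradedDerivation_pd Y) (op₂.L X) 0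
    have hc : op₁.L X ∘ₗ c.pd Y - c.pd Y ∘ₗ op₁.L X = c.pd ⁅X, Y⁆ := c.L_pd X Y
    simp only [zero_mul, sgn_of_even Even.zero, one_smul, hc, sub_self, LinearMap.comp_zero,
      LinearMap.zero_comp, zero_add] at h
    exact h

end CurvatureDerivation

/-! ### The Weil algebra -/

section SymExt

variable {V T : Type} [AddCommGroup V] [Module ℝ V] [Ring T] [Algebra ℝ T]

/-- The extension of a linear map with central values to the symmetric algebra. -/
def centralLift (o : V →ₗ[ℝ] T) (ho : ∀ v, o v ∈ Subalgebra.center ℝ T) :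
    SymmetricAlgebra ℝ V →ₐ[ℝ] Subalgebra.center ℝ T :=
  SymmetricAlgebra.lift (o.codRestrict (Subalgebra.center ℝ T).toSubmodule ho)

theorem commute_centralLift (o : V →ₗ[ℝ] T) (ho : ∀ v, o v ∈ Subalgebra.center ℝ T)
    (x : SymmetricAlgebra ℝ V) (y : T) : Commute (centralLift o ho x : T) y :=
  (Subalgebra.mem_center_iff.1 (centralLift o ho x).2 y).symm

/-- The algebra homomorphism from the tensor product of the symmetric and the exterior algebra of
`V` determined by its values `o` and `t` on the two copies of `V`. -/
def symExtLift (o t : V →ₗ[ℝ] T) (ho : ∀ v, o v ∈ Subalgebra.center ℝ T)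
    (ht : ∀ v, t v * t v = 0) : SymmetricAlgebra ℝ V ⊗[ℝ] ExteriorAlgebra ℝ V →ₐ[ℝ] T :=
  Algebra.TensorProduct.lift ((Subalgebra.center ℝ T).val.comp (centralLift o ho))
    (ExteriorAlgebra.lift ℝ ⟨t, ht⟩) fun x _ => commute_centralLift o ho x _

variable {o t : V →ₗ[ℝ] T} (ho : ∀ v, o v ∈ Subalgebra.center ℝ T) (ht : ∀ v, t v * t v = 0)

theorem centralLift_ι (v : V) : (centralLift o ho (SymmetricAlgebra.ι ℝ V v) : T) = o v := by
  rw [centralLift, SymmetricAlgebra.lift_ι_apply]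
  rfl

theorem symExtLift_tmul (x : SymmetricAlgebra ℝ V) (y : ExteriorAlgebra ℝ V) :
    symExtLift o t ho ht (x ⊗ₜ y) = centralLift o ho x * ExteriorAlgebra.lift ℝ ⟨t, ht⟩ y :=
  Algebra.TensorProduct.lift_tmul _ _ _ x y

theorem symExtLift_ι_tmul_one (v : V) :
    symExtLift o t ho ht (SymmetricAlgebra.ι ℝ V v ⊗ₜ 1) = o v := by
  rw [symExtLift_tmul, centralLift_ι, map_one, mul_one]

theorem symExtLift_one_tmul_ι (v : V) :
    symExtLift o t ho ht (1 ⊗ₜ ExteriorAlgebra.ι ℝ v) = t v := by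
  rw [symExtLift_tmul, ExteriorAlgebra.lift_ι_apply, map_one, OneMemClass.coe_one, one_mul]

theorem adjoin_symExt_eq_top : Algebra.adjoin ℝ
    (Set.range (fun v : V => SymmetricAlgebra.ι ℝ V v ⊗ₜ[ℝ] (1 : ExteriorAlgebra ℝ V)) ∪
      Set.range fun v : V => (1 : SymmetricAlgebra ℝ V) ⊗ₜ[ℝ] ExteriorAlgebra.ι ℝ v) = ⊤ := by
  set S := Algebra.adjoin ℝ
    (Set.range (fun v : V => SymmetricAlgebra.ι ℝ V v ⊗ₜ[ℝ] (1 : ExteriorAlgebra ℝ V)) ∪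
      Set.range fun v : V => (1 : SymmetricAlgebra ℝ V) ⊗ₜ[ℝ] ExteriorAlgebra.ι ℝ v)
  have left_mem (x : SymmetricAlgebra ℝ V) : x ⊗ₜ[ℝ] 1 ∈ S := by
    change Algebra.TensorProduct.includeLeft (S := ℝ) x ∈ S
    induction x using SymmetricAlgebra.induction with
    | algebraMap r => rw [AlgHom.commutes]; exact S.algebraMap_mem r
    | ι v => exact Algebra.subset_adjoin (.inl ⟨v, rfl⟩)
    | add x y hx hy => rw [map_add]; exact S.add_mem hx hy
    | mul x y hx hy => rw [map_mul]; exact S.mul_mem hx hy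
  have right_mem (y : ExteriorAlgebra ℝ V) : 1 ⊗ₜ[ℝ] y ∈ S := by
    change Algebra.TensorProduct.includeRight y ∈ S
    induction y using ExteriorAlgebra.induction with
    | algebraMap r => rw [AlgHom.commutes]; exact S.algebraMap_mem r
    | ι v => exact Algebra.subset_adjoin (.inr ⟨v, rfl⟩)
    | add x y hx hy => rw [map_add]; exact S.add_mem hx hy
    | mul x y hx hy => rw [map_mul]; exact S.mul_mem hx hy
  refine Algebra.eq_top_iff.2 fun z => ?_
  induction z using TensorProduct.induction_on with
  | zero => exact S.zero_mem
  | add x y hx hy => exact S.add_mem hx hy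
  | tmul x y =>
    have h := S.mul_mem (left_mem x) (right_mem y)
    rwa [Algebra.TensorProduct.tmul_mul_tmul, mul_one, one_mul] at h

theorem centralLift_symmetricAlgebra {J : Type} [Fintype J] [LinearOrder J]
    (e : Module.Basis J ℝ V) (m : J →₀ ℕ) : (centralLift o ho (e.symmetricAlgebra m) : T) =
      ((Finset.univ.sort (· ≤ ·)).map fun i => o (e i) ^ m i).prod := by
  have basis_eq : e.symmetricAlgebra m =
      ((Finset.univ.sort (· ≤ ·)).map fun i => SymmetricAlgebra.ι ℝ V (e i) ^ m i).prod := by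
    rw [← List.prod_toFinset _ (Finset.sort_nodup _ _), Finset.sort_toFinset]
    simp [Module.Basis.symmetricAlgebra, MvPolynomial.monomial_eq, Finsupp.prod_fintype]
  rw [basis_eq, ← Subalgebra.val_apply, ← AlgHom.comp_apply, map_list_prod, List.map_map]
  congr 2
  ext i
  rw [Function.comp_apply, map_pow, AlgHom.comp_apply, Subalgebra.val_apply, centralLift_ι]

theorem exteriorAlgebra_lift_basis {J : Type} [LinearOrder J] (e : Module.Basis J ℝ V)
    (s : Finset J) : ExteriorAlgebra.lift ℝ ⟨t, ht⟩ (e.ExteriorAlgebra s) =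
      ((s.sort (· ≤ ·)).map fun i => t (e i)).prod := by
  have basis_eq : e.ExteriorAlgebra s =
      ((s.sort (· ≤ ·)).map fun i => ExteriorAlgebra.ι ℝ (e i)).prod := by
    rw [ExteriorAlgebra.basis_apply_ofCard e rfl,
      ← Finset.listMap_orderEmbOfFin_finRange s rfl, List.map_map, ← List.ofFn_eq_map]
    exact ExteriorAlgebra.ιMulti_apply _
  rw [basis_eq, map_list_prod, List.map_map]
  congr 2
  ext i
  exact ExteriorAlgebra.lift_ι_apply ℝ t ht (e i)

theorem symExtLift_bijective {J : Type} [Fintype J] [LinearOrder J] (e : Module.Basis J ℝ V)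
    (w : Module.Basis ((J →₀ ℕ) × Finset J) ℝ T)
    (hw : ∀ p, w p = ((Finset.univ.sort (· ≤ ·)).map fun i => o (e i) ^ p.1 i).prod *
      ((p.2.sort (· ≤ ·)).map fun i => t (e i)).prod) :
    Function.Bijective (symExtLift o t ho ht) := by
  let f := (e.symmetricAlgebra.tensorProduct e.ExteriorAlgebra).equiv w (Equiv.refl _)
  have map_basis (p) : symExtLift o t ho ht (e.symmetricAlgebra.tensorProduct
      e.ExteriorAlgebra p) = w p := by
    rw [Module.Basis.tensorProduct_apply', symExtLift_tmul, centralLift_symmetricAlgebra,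
      exteriorAlgebra_lift_basis, hw]
  have h : (symExtLift o t ho ht).toLinearMap = f :=
    (e.symmetricAlgebra.tensorProduct e.ExteriorAlgebra).ext fun p =>
      (map_basis p).trans (Module.Basis.equiv_apply _ p w (Equiv.refl _)).symm
  exact (congrArg (fun g : _ →ₗ[ℝ] T => Function.Bijective g) h).mpr f.bijective

end SymExt

namespace Operation

theorem mul_self_eq_zero (op : Operation 𝔤 A) {a : A} (ha : a ∈ op.grading 1) : a * a = 0 := by
  have anticomm : a * a = -(a * a) := by
    rw [← neg_one_zsmul, ← sgn_one]
    exact op.supercomm ha ha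
  have := IsAddTorsionFree.of_isTorsionFree ℝ A
  exact self_eq_neg.1 anticomm

theorem mem_center_of_even (op : Operation 𝔤 A) {n : ℤ} (hn : Even n) {a : A}
    (ha : a ∈ op.grading n) : a ∈ Subalgebra.center ℝ A := by
  refine Subalgebra.mem_center_iff.2 fun b => LinearMap.congr_fun
    (f := LinearMap.mulRight ℝ a) (g := LinearMap.mulLeft ℝ a)
    (linearMap_ext_homogeneous (𝒜 := op.grading) fun m b hb => ?_) b
  rw [LinearMap.mulRight_apply, LinearMap.mulLeft_apply, op.supercomm hb ha,
    sgn_of_even (hn.mul_left m), one_smul]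

end Operation

section QuadraticPart

variable {J : Type} [Fintype J] {T T' : Type} [Ring T] [Algebra ℝ T] [Ring T'] [Algebra ℝ T']

/-- The difference `½ Σ γ([eⱼ, eₖ]) tʲ tᵏ` between curvature and exterior derivative of the
component at the covector `γ` of a connection form `t`. -/
def bracketPart (b : Module.Basis J ℝ 𝔤) (t : Module.Dual ℝ 𝔤 →ₗ[ℝ] T) :
    Module.Dual ℝ 𝔤 →ₗ[ℝ] T :=
  (1 / 2 : ℝ) • ∑ j, ∑ k,
    (Module.Dual.eval ℝ 𝔤 ⁅b j, b k⁆).smulRight (t (b.coord j) * t (b.coord k))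

variable (b : Module.Basis J ℝ 𝔤) (t : Module.Dual ℝ 𝔤 →ₗ[ℝ] T) (γ : Module.Dual ℝ 𝔤)

theorem bracketPart_apply : bracketPart b t γ =
    (1 / 2 : ℝ) • ∑ j, ∑ k, γ ⁅b j, b k⁆ • (t (b.coord j) * t (b.coord k)) := by
  simp [bracketPart]

theorem map_bracketPart (φ : T →ₐ[ℝ] T') :
    φ (bracketPart b t γ) = bracketPart b (φ.toLinearMap ∘ₗ t) γ := by
  simp only [bracketPart_apply, map_smul, map_sum, map_mul, LinearMap.comp_apply,
    AlgHom.toLinearMap_apply]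

theorem bracketPart_mem {S : Submodule ℝ T} (hS : ∀ α β, t α * t β ∈ S) :
    bracketPart b t γ ∈ S := by
  rw [bracketPart_apply]
  exact S.smul_mem _ (S.sum_mem fun j _ => S.sum_mem fun k _ => S.smul_mem _ (hS _ _))

end QuadraticPart

namespace WeilData

variable {b : Module.Basis ι ℝ 𝔤} (wd : WeilData ι b W)

/-- The connection form of the Weil algebra, as a function of the covector in which its component
is taken. -/
def conn : Module.Dual ℝ 𝔤 →ₗ[ℝ] W := b.dualBasis.constr ℝ wd.θ

/-- The curvature form of the Weil algebra, as a function of the covector in which its component is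
taken. -/
def curvature : Module.Dual ℝ 𝔤 →ₗ[ℝ] W := wd.d ∘ₗ wd.conn + bracketPart b wd.conn

theorem conn_coord (i : ι) : wd.conn (b.coord i) = wd.θ i := by
  rw [conn, ← b.coe_dualBasis, Module.Basis.constr_basis]

theorem curvature_coord (i : ι) : wd.curvature (b.coord i) = wd.Ω i := by
  rw [curvature, LinearMap.add_apply, LinearMap.comp_apply, bracketPart_apply]
  simp only [conn_coord, wd.d_θ, structConst, Module.Basis.coord_apply, neg_smul]
  abel

theorem conn_mem (γ : Module.Dual ℝ 𝔤) : wd.conn γ ∈ wd.grading 1 := by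
  rw [← b.sum_dual_apply_smul_coord γ, map_sum]
  refine Submodule.sum_mem _ fun i _ => ?_
  rw [map_smul, conn_coord]
  exact Submodule.smul_mem _ _ (wd.θ_mem i)

theorem d_conn_mem (γ : Module.Dual ℝ 𝔤) : wd.d (wd.conn γ) ∈ wd.grading 2 :=
  wd.d_mem (wd.conn_mem γ)

theorem curvature_mem (γ : Module.Dual ℝ 𝔤) : wd.curvature γ ∈ wd.grading 2 :=
  Submodule.add_mem _ (wd.d_conn_mem γ)
    (bracketPart_mem b _ γ fun α β => wd.mul_mem (wd.conn_mem α) (wd.conn_mem β))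

theorem I_conn (X : 𝔤) (γ : Module.Dual ℝ 𝔤) : wd.I X (wd.conn γ) = γ X • (1 : W) := by
  have I_θ (j : ι) (X : 𝔤) : wd.I X (wd.θ j) = b.coord j X • (1 : W) :=
    LinearMap.congr_fun (f := wd.I.flip (wd.θ j)) (g := (b.coord j).smulRight 1)
      (b.ext fun i => by simp [wd.I_θ, Finsupp.single_apply]) X
  refine LinearMap.congr_fun (f := wd.I X ∘ₗ wd.conn) (g := (Module.Dual.eval ℝ 𝔤 X).smulRight 1)
    (b.dualBasis.ext fun j => ?_) γ
  simp [b.coe_dualBasis, wd.conn_coord, I_θ]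

theorem L_conn (X : 𝔤) (γ : Module.Dual ℝ 𝔤) :
    wd.L X (wd.conn γ) = -wd.conn (γ ∘ₗ LieAlgebra.ad ℝ 𝔤 X) := by
  have conn_ad (i j : ι) : wd.conn (b.coord j ∘ₗ LieAlgebra.ad ℝ 𝔤 (b i)) =
      ∑ k, structConst b j i k • wd.θ k := by
    rw [← b.sum_dual_apply_smul_coord (b.coord j ∘ₗ LieAlgebra.ad ℝ 𝔤 (b i)), map_sum]
    simp [wd.conn_coord, structConst]
  have L_θ (j : ι) (X : 𝔤) : wd.L X (wd.θ j) = -wd.conn (b.coord j ∘ₗ LieAlgebra.ad ℝ 𝔤 X) :=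
    LinearMap.congr_fun (f := wd.L.flip (wd.θ j))
      (g := -(wd.conn ∘ₗ (b.coord j).compRight ℝ ∘ₗ (LieAlgebra.ad ℝ 𝔤 : 𝔤 →ₗ[ℝ] Module.End ℝ 𝔤)))
      (b.ext fun i => by simpa [conn_ad] using wd.L_θ i j) X
  refine LinearMap.congr_fun (f := wd.L X ∘ₗ wd.conn)
    (g := -(wd.conn ∘ₗ (LieAlgebra.ad ℝ 𝔤 X).dualMap)) (b.dualBasis.ext fun j => ?_) γ
  simpa [b.coe_dualBasis, wd.conn_coord, LinearMap.dualMap_apply'] using L_θ j X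

theorem symExtLift_curvature_conn_bijective : Function.Bijective
    (symExtLift wd.curvature wd.conn
      (fun γ => wd.mem_center_of_even even_two (wd.curvature_mem γ))
      fun γ => wd.mul_self_eq_zero (wd.conn_mem γ)) := by
  obtain ⟨w, hw⟩ := wd.free
  refine symExtLift_bijective _ _ b.dualBasis w fun p => ?_
  simp only [b.coe_dualBasis, curvature_coord, conn_coord, hw]

/-- The components of the connection form and their differentials. -/
def generators : Set W := Set.range wd.conn ∪ Set.range (wd.d ∘ wd.conn)

theorem adjoin_generators : Algebra.adjoin ℝ wd.generators = ⊤ := by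
  have conn_mem (γ) : wd.conn γ ∈ Algebra.adjoin ℝ wd.generators :=
    Algebra.subset_adjoin (.inl ⟨γ, rfl⟩)
  have curvature_mem (γ) : wd.curvature γ ∈ Algebra.adjoin ℝ wd.generators :=
    Subalgebra.add_mem _ (Algebra.subset_adjoin (.inr ⟨γ, rfl⟩)) <|
      bracketPart_mem (S := (Algebra.adjoin ℝ wd.generators).toSubmodule) b _ γ fun α β =>
        Subalgebra.mul_mem _ (conn_mem α) (conn_mem β)
  have range_eq_top := (AlgHom.range_eq_top _).2 wd.symExtLift_curvature_conn_bijective.surjective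
  rw [← Algebra.map_top, ← adjoin_symExt_eq_top, AlgHom.map_adjoin] at range_eq_top
  rw [eq_top_iff, ← range_eq_top, Algebra.adjoin_le_iff]
  rintro _ ⟨_, ⟨γ, rfl⟩ | ⟨γ, rfl⟩, rfl⟩
  · exact Set.mem_of_eq_of_mem (symExtLift_ι_tmul_one _ _ γ) (curvature_mem γ)
  · exact Set.mem_of_eq_of_mem (symExtLift_one_tmul_ι _ _ γ) (conn_mem γ)

theorem exists_algHom {T : Type} [Ring T] [Algebra ℝ T] (t u : Module.Dual ℝ 𝔤 →ₗ[ℝ] T)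
    (ht : ∀ γ, t γ * t γ = 0) (htt : ∀ α β, t α * t β ∈ Subalgebra.center ℝ T)
    (hu : ∀ γ, u γ ∈ Subalgebra.center ℝ T) :
    ∃ φ : W →ₐ[ℝ] T, (∀ γ, φ (wd.conn γ) = t γ) ∧ ∀ γ, φ (wd.d (wd.conn γ)) = u γ := by
  let e := AlgEquiv.ofBijective _ wd.symExtLift_curvature_conn_bijective
  have ho (γ) : (u + bracketPart b t) γ ∈ Subalgebra.center ℝ T := Subalgebra.add_mem _ (hu γ) <|
    bracketPart_mem (S := (Subalgebra.center ℝ T).toSubmodule) b t γ htt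
  let φ : W →ₐ[ℝ] T := (symExtLift (u + bracketPart b t) t ho ht).comp e.symm
  have map_conn (γ) : φ (wd.conn γ) = t γ := by
    have h : e.symm (wd.conn γ) = 1 ⊗ₜ ExteriorAlgebra.ι ℝ γ :=
      e.symm_apply_eq.2 (symExtLift_one_tmul_ι _ _ γ).symm
    exact (congrArg _ h).trans (symExtLift_one_tmul_ι ho ht γ)
  have map_curvature (γ) : φ (wd.curvature γ) = u γ + bracketPart b t γ := by
    have h : e.symm (wd.curvature γ) = SymmetricAlgebra.ι ℝ _ γ ⊗ₜ 1 :=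
      e.symm_apply_eq.2 (symExtLift_ι_tmul_one _ _ γ).symm
    exact (congrArg _ h).trans (symExtLift_ι_tmul_one ho ht γ)
  refine ⟨φ, map_conn, fun γ => add_right_cancel (b := bracketPart b t γ) ?_⟩
  have hφt : φ.toLinearMap ∘ₗ wd.conn = t := LinearMap.ext map_conn
  rw [← map_curvature, curvature, LinearMap.add_apply, map_add, map_bracketPart, hφt,
    LinearMap.comp_apply]

end WeilData

theorem inl_mem_center_trivSqZeroExt {a : A} (ha : a ∈ Subalgebra.center ℝ A) :
    TrivSqZeroExt.inl a ∈ Subalgebra.center ℝ (TrivSqZeroExt A A) := by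
  rw [Subalgebra.mem_center_iff] at ha ⊢
  intro x
  ext <;> simp [ha]

theorem inr_one_mem_center_trivSqZeroExt :
    TrivSqZeroExt.inr 1 ∈ Subalgebra.center ℝ (TrivSqZeroExt A A) := by
  rw [Subalgebra.mem_center_iff]
  intro x
  ext <;> simp

namespace WeilData

variable {b : Module.Basis ι ℝ 𝔤} (wd : WeilData ι b W)

theorem algHom_ext {T : Type} [Ring T] [Algebra ℝ T] {φ χ : W →ₐ[ℝ] T}
    (hconn : ∀ γ, φ (wd.conn γ) = χ (wd.conn γ))
    (hd : ∀ γ, φ (wd.d (wd.conn γ)) = χ (wd.d (wd.conn γ))) : φ = χ := by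
  refine AlgHom.ext_of_adjoin_eq_top wd.adjoin_generators ?_
  rintro _ (⟨γ, rfl⟩ | ⟨γ, rfl⟩)
  exacts [hconn γ, hd γ]

theorem isGradedDerivation_ext {k : ℤ} {f g : Module.End ℝ W}
    (hf : IsGradedDerivation wd.grading k f) (hg : IsGradedDerivation wd.grading k g)
    (hconn : ∀ γ, f (wd.conn γ) = g (wd.conn γ))
    (hd : ∀ γ, f (wd.d (wd.conn γ)) = g (wd.d (wd.conn γ))) : f = g := by
  refine hf.ext_of_adjoin_eq_top hg wd.adjoin_generators ?_
  rintro _ (⟨γ, rfl⟩ | ⟨γ, rfl⟩)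
  exacts [hconn γ, hd γ]

theorem exists_partialDerivative (X : 𝔤) : ∃ f : Module.End ℝ W,
    IsGradedDerivation wd.grading (-2) f ∧ (∀ γ, f (wd.conn γ) = 0) ∧
      ∀ γ, f (wd.d (wd.conn γ)) = γ X • (1 : W) := by
  -- A derivation of `W` is the same as a section of the dual numbers `W[ε] → W`.
  let inl := TrivSqZeroExt.inlAlgHom ℝ W W
  let t := inl.toLinearMap ∘ₗ wd.conn
  let u := inl.toLinearMap ∘ₗ wd.d ∘ₗ wd.conn +
    (Module.Dual.eval ℝ 𝔤 X).smulRight (TrivSqZeroExt.inr (1 : W))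
  obtain ⟨φ, map_conn, map_d_conn⟩ := wd.exists_algHom t u
    (fun γ => by
      rw [LinearMap.comp_apply, AlgHom.toLinearMap_apply, ← map_mul,
        wd.mul_self_eq_zero (wd.conn_mem γ), map_zero])
    (fun α β => by
      have h := inl_mem_center_trivSqZeroExt <| wd.mem_center_of_even even_two <|
        wd.mul_mem (wd.conn_mem α) (wd.conn_mem β)
      rwa [TrivSqZeroExt.inl_mul] at h)
    (fun γ => Subalgebra.add_mem _
      (inl_mem_center_trivSqZeroExt (wd.mem_center_of_even even_two (wd.d_conn_mem γ)))
      (Subalgebra.smul_mem _ inr_one_mem_center_trivSqZeroExt _))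
  have fst_φ (a : W) : (φ a).fst = a := by
    have h : (TrivSqZeroExt.fstHom ℝ W W).comp φ = AlgHom.id ℝ W := by
      refine wd.algHom_ext (fun γ => ?_) fun γ => ?_
      · simp [map_conn, t, inl]
      · simp [map_d_conn, u, inl]
    exact AlgHom.congr_fun h a
  let f : Module.End ℝ W := (TrivSqZeroExt.sndHom W W).restrictScalars ℝ ∘ₗ φ.toLinearMap
  have f_conn (γ) : f (wd.conn γ) = 0 := by simp [f, map_conn, t, inl]
  have f_d_conn (γ) : f (wd.d (wd.conn γ)) = γ X • 1 := by simp [f, map_d_conn, u, inl]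
  refine ⟨f, isGradedDerivation_of_adjoin_eq_top even_neg_two (fun a b => ?_)
    wd.adjoin_generators ?_, f_conn, f_d_conn⟩
  · simp [f, fst_φ, add_comm]
  · rintro _ (⟨γ, rfl⟩ | ⟨γ, rfl⟩)
    · exact ⟨1, wd.conn_mem γ, (f_conn γ).symm ▸ Submodule.zero_mem _⟩
    · exact ⟨2, wd.d_conn_mem γ, (f_d_conn γ).symm ▸ Submodule.smul_mem _ _ wd.one_mem⟩

theorem exists_linear_partialDerivative : ∃ pd : 𝔤 →ₗ[ℝ] Module.End ℝ W, ∀ X,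
    IsGradedDerivation wd.grading (-2) (pd X) ∧ (∀ γ, pd X (wd.conn γ) = 0) ∧
      ∀ γ, pd X (wd.d (wd.conn γ)) = γ X • (1 : W) := by
  choose pd isDer pd_conn pd_d_conn using wd.exists_partialDerivative
  refine ⟨{ toFun := pd, map_add' X Y := ?_, map_smul' c X := ?_ }, fun X =>
    ⟨isDer X, pd_conn X, pd_d_conn X⟩⟩
  · exact wd.isGradedDerivation_ext (isDer _) ((isDer X).add (isDer Y))
      (fun γ => by simp [pd_conn]) fun γ => by simp [pd_d_conn, add_smul]
  · exact wd.isGradedDerivation_ext (isDer _) ((isDer X).smul c)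
      (fun γ => by simp [pd_conn]) fun γ => by simp [pd_d_conn, mul_smul]

/-- The connection of the Weil algebra, with the partial derivatives in which the components of the
connection and their differentials are the free variables. -/
def curvatureDerivation : CurvatureDerivation wd.toOperation :=
  have spec := wd.exists_linear_partialDerivative.choose_spec
  { θ := wd.conn
    θ_mem := wd.conn_mem
    I_θ := wd.I_conn
    L_θ := wd.L_conn
    pd := wd.exists_linear_partialDerivative.choose
    isGradedDerivation_pd X := (spec X).1
    pd_θ X := (spec X).2.1
    pd_d_θ X := (spec X).2.2
    commute_I_pd X Y := by
      have hsgn : sgn (-1 * -2) = 1 := by decide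
      have h := wd.isGradedDerivation_ext
        ((wd.isGradedDerivation_I X).superbracket (spec Y).1) .zero
        (fun γ => by simp [(spec Y).2.1, wd.I_conn, (spec Y).1.map_one])
        fun γ => by simp [(spec Y).2, wd.I_d, wd.I_conn, wd.L_conn,
          (wd.isGradedDerivation_I X).map_one, wd.isGradedDerivation_d.map_one]
      rw [hsgn, one_smul] at h
      exact sub_eq_zero.1 h
    L_pd X Y := by
      have L_d_apply (a : W) : wd.L X (wd.d a) = wd.d (wd.L X a) :=
        LinearMap.congr_fun (wd.L_d X) a
      have h := wd.isGradedDerivation_ext (zero_add (-2 : ℤ) ▸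
          (wd.isGradedDerivation_L X).superbracket (spec Y).1) (spec ⁅X, Y⁆).1
        (fun γ => by simp [(spec _).2.1, wd.L_conn])
        fun γ => by simp [(spec _).2, L_d_apply, wd.L_conn, sgn_of_even,
          (wd.isGradedDerivation_L X).map_one]
      rwa [zero_mul, sgn_of_even Even.zero, one_smul] at h }

section TwoWeilAlgebras

variable (wdG : WeilData ι b W) {bq : Module.Basis κ ℝ 𝔮} (wdQ : WeilData κ bq WQ)

theorem exists_algHom_map_d (op : Operation 𝔤 A) {t : Module.Dual ℝ 𝔮 →ₗ[ℝ] A}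
    (ht : ∀ β, t β ∈ op.grading 1) : ∃ φ : WQ →ₐ[ℝ] A, (∀ β, φ (wdQ.conn β) = t β) ∧
      (∀ n, ∀ w ∈ wdQ.grading n, φ w ∈ op.grading n) ∧ ∀ w, φ (wdQ.d w) = op.d (φ w) := by
  obtain ⟨φ, map_conn, map_d_conn⟩ := wdQ.exists_algHom t (op.d ∘ₗ t)
    (fun β => op.mul_self_eq_zero (ht β))
    (fun α β => op.mem_center_of_even even_two (op.mul_mem (ht α) (ht β)))
    (fun β => op.mem_center_of_even even_two (op.d_mem (ht β)))
  have map_mem (n) : ∀ w ∈ wdQ.grading n, φ w ∈ op.grading n := fun w =>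
    algHom_map_mem_of_adjoin_eq_top wdQ.adjoin_generators <| by
      rintro _ (⟨β, rfl⟩ | ⟨β, rfl⟩)
      · exact ⟨1, wdQ.conn_mem β, map_conn β ▸ ht β⟩
      · exact ⟨2, wdQ.d_conn_mem β, (map_d_conn β).symm ▸ op.d_mem (ht β)⟩
  refine ⟨φ, map_conn, map_mem, wdQ.isGradedDerivation_d.map_comm_of_adjoin_eq_top
    op.isGradedDerivation_d (map_gradedScale (φ := φ.toLinearMap) map_mem _)
    wdQ.adjoin_generators ?_⟩
  rintro _ (⟨β, rfl⟩ | ⟨β, rfl⟩)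
  · rw [map_conn]; exact map_d_conn β
  · exact (congrArg φ (wdQ.d_d _)).trans <| (map_zero φ).trans <|
      ((congrArg op.d (map_d_conn β)).trans (op.d_d _)).symm

theorem isOperationHom_of_map_conn {π : 𝔤 →ₗ⁅ℝ⁆ 𝔮} {φ : WQ →ₐ[ℝ] W}
    (map_conn : ∀ β, φ (wdQ.conn β) = wdG.conn (β ∘ₗ π))
    (map_mem : ∀ n, ∀ w ∈ wdQ.grading n, φ w ∈ wdG.grading n)
    (map_d : ∀ w, φ (wdQ.d w) = wdG.d (φ w)) :
    IsOperationHom wdQ.toOperation wdG.toOperation π φ where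
  map_mem := map_mem
  map_d := map_d
  map_I X := by
    refine (wdQ.isGradedDerivation_I (π X)).map_comm_of_adjoin_eq_top (wdG.isGradedDerivation_I X)
      (map_gradedScale (φ := φ.toLinearMap) map_mem _) wdQ.adjoin_generators ?_
    have ad_comp (β : Module.Dual ℝ 𝔮) : (β ∘ₗ LieAlgebra.ad ℝ 𝔮 (π X)) ∘ₗ (π : 𝔤 →ₗ[ℝ] 𝔮) =
        (β ∘ₗ (π : 𝔤 →ₗ[ℝ] 𝔮)) ∘ₗ LieAlgebra.ad ℝ 𝔤 X := by
      ext Y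
      simp
    have map_I_conn (β : Module.Dual ℝ 𝔮) :
        φ (wdQ.I (π X) (wdQ.conn β)) = wdG.I X (φ (wdQ.conn β)) := by
      rw [map_conn, wdQ.I_conn, wdG.I_conn, map_smul, map_one]
      rfl
    rintro _ (⟨β, rfl⟩ | ⟨β, rfl⟩)
    · exact map_I_conn β
    · rw [Function.comp_apply, wdQ.I_d, map_sub, map_d, map_d, map_I_conn, wdG.I_d, wdQ.L_conn,
        map_neg, map_conn, map_conn, wdG.L_conn, ad_comp]

theorem exists_isOperationHom (π : 𝔤 →ₗ⁅ℝ⁆ 𝔮) (hπ : Function.Surjective π) :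
    ∃ φ : WQ →ₐ[ℝ] W, IsOperationHom wdQ.toOperation wdG.toOperation π φ ∧
      Function.Injective φ ∧ ∀ β, φ (wdQ.conn β) = wdG.conn (β ∘ₗ π) := by
  obtain ⟨φ, φ_conn, φ_mem, φ_d⟩ := wdQ.exists_algHom_map_d wdG.toOperation
    (t := wdG.conn ∘ₗ (π : 𝔤 →ₗ[ℝ] 𝔮).dualMap) fun β => wdG.conn_mem _
  obtain ⟨s, hs⟩ := (π : 𝔤 →ₗ[ℝ] 𝔮).exists_rightInverse_of_surjective
    (LinearMap.range_eq_top.2 hπ)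
  obtain ⟨ρ, ρ_conn, -, ρ_d⟩ := wdG.exists_algHom_map_d wdQ.toOperation
    (t := wdQ.conn ∘ₗ s.dualMap) fun γ => wdQ.conn_mem _
  have ρ_φ_conn (β) : ρ (φ (wdQ.conn β)) = wdQ.conn β := by
    have hβ : s.dualMap ((π : 𝔤 →ₗ[ℝ] 𝔮).dualMap β) = β :=
      LinearMap.ext fun X => congrArg β (LinearMap.congr_fun hs X)
    rw [φ_conn, LinearMap.comp_apply, ρ_conn, LinearMap.comp_apply, hβ]
  have hρφ : ρ.comp φ = AlgHom.id ℝ WQ := wdQ.algHom_ext ρ_φ_conn fun β => by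
    simp [φ_d, ρ_d, ρ_φ_conn]
  exact ⟨φ, wdG.isOperationHom_of_map_conn wdQ φ_conn φ_mem φ_d,
    Function.LeftInverse.injective (g := ρ) (AlgHom.congr_fun hρφ), φ_conn⟩

theorem pd_eq_zero_of_isOperationHom {π : 𝔤 →ₗ⁅ℝ⁆ 𝔮} {φ : WQ →ₐ[ℝ] W}
    (hφ : IsOperationHom wdQ.toOperation wdG.toOperation π φ)
    (map_conn : ∀ β, φ (wdQ.conn β) = wdG.conn (β ∘ₗ π)) {X : 𝔤} (hX : π X = 0) (w : WQ) :
    wdG.curvatureDerivation.pd X (φ w) = 0 := by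
  have pd_conn := wdG.curvatureDerivation.pd_θ X
  have pd_d_conn := wdG.curvatureDerivation.pd_d_θ X
  refine (IsGradedDerivation.zero.map_comm_of_adjoin_eq_top (𝒜 := wdQ.grading)
    (wdG.curvatureDerivation.isGradedDerivation_pd X)
    (map_gradedScale (φ := φ.toLinearMap) hφ.map_mem _) wdQ.adjoin_generators ?_ w).symm.trans
    (map_zero φ)
  rintro _ (⟨β, rfl⟩ | ⟨β, rfl⟩)
  · rw [map_conn]
    exact (map_zero φ).trans (pd_conn _).symm
  · rw [Function.comp_apply, hφ.map_d, map_conn]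
    exact (map_zero φ).trans ((pd_d_conn _).trans (by simp [hX])).symm

end TwoWeilAlgebras

end WeilData

/-! ### The basic subcomplex of a free quotient -/

theorem mem_range_lTensor_of_forall {U V V' : Type*} [AddCommGroup U] [Module ℝ U]
    [AddCommGroup V] [Module ℝ V] [AddCommGroup V'] [Module ℝ V'] {ψ : V' →ₗ[ℝ] V}
    {S : Set (Module.End ℝ V)} (hS : ∀ a, (∀ f ∈ S, f a = 0) → a ∈ LinearMap.range ψ)
    {y : U ⊗[ℝ] V} (hy : ∀ f ∈ S, f.lTensor U y = 0) : y ∈ LinearMap.range (ψ.lTensor U) := by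
  classical
  let e := TensorProduct.equivFinsuppOfBasisLeft (N := V) (Module.Basis.ofVectorSpace ℝ U)
  have coord_lTensor (f : Module.End ℝ V) (i) (z : U ⊗[ℝ] V) : e (f.lTensor U z) i = f (e z i) := by
    induction z using TensorProduct.induction_on with
    | zero => simp only [map_zero, Finsupp.zero_apply]
    | add z w hz hw => simp only [map_add, Finsupp.add_apply, hz, hw]
    | tmul u a => simp [e]
  have coord_mem (i) : e y i ∈ LinearMap.range ψ := hS _ fun f hf => by
    rw [← coord_lTensor, hy f hf, map_zero, Finsupp.zero_apply]
  rw [← e.symm_apply_apply y, TensorProduct.equivFinsuppOfBasisLeft_symm_apply]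
  refine Submodule.sum_mem _ fun i _ => ?_
  obtain ⟨x, hx⟩ := coord_mem i
  exact ⟨Module.Basis.ofVectorSpace ℝ U i ⊗ₜ x, by rw [LinearMap.lTensor_tmul, hx]⟩

section Reduction

open GradedTensorProduct

variable {π : 𝔤 →ₗ⁅ℝ⁆ 𝔮} {opQ : Operation 𝔮 B} {op : Operation 𝔤 A} {ψ : B →ₐ[ℝ] A}
  {opW : Operation 𝔤 W} {opWQ : Operation 𝔮 WQ} {φ : WQ →ₐ[ℝ] W} {𝔫 : Submodule ℝ 𝔤}

/-- The image of `φ ⊗ id : WQ ⊗ A → W ⊗ A`. -/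
def IsOperationHom.tensorIdRange (hφ : IsOperationHom opWQ opW π φ) (op : Operation 𝔤 A) :
    Subalgebra ℝ (opW.grading ᵍ⊗[ℝ] op.grading) :=
  (gradedTensorMap φ (AlgHom.id ℝ A) (ℬ' := op.grading) hφ.map_mem fun _ _ h => h).range

namespace IsOperationHom

theorem mem_range_tensor_of_mem_bas (hφ : IsOperationHom opWQ opW π φ)
    (hψ : IsOperationHom opQ op π ψ) (hφinj : Function.Injective φ) (hπ : ∀ X ∈ 𝔫, π X = 0)
    (hψrange : ∀ a, (∀ X ∈ 𝔫, op.L X a = 0) → (∀ X ∈ 𝔫, op.I X a = 0) → a ∈ ψ.range)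
    {z : opW.grading ᵍ⊗[ℝ] op.grading} (hz : z ∈ (opW.tensor op).bas)
    (hzF : z ∈ hφ.tensorIdRange op) :
    z ∈ LinearMap.range (gradedTensorMap φ ψ hφ.map_mem hψ.map_mem).toLinearMap := by
  obtain ⟨y, rfl⟩ := hzF
  obtain ⟨hL, hI⟩ := Operation.mem_bas_iff.1 hz
  have hinj := gradedTensorMap_injective (ℬ := op.grading) (ℬ' := op.grading)
    (χ := AlgHom.id ℝ A) hφ.map_mem (fun _ _ h => h) hφinj Function.injective_id
  have zero_comm {f : Module.End ℝ WQ} {f' : Module.End ℝ W} (hf : ∀ w, φ (f w) = f' (φ w))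
      (h0 : f = 0) (w : WQ) : φ ((0 : Module.End ℝ WQ) w) = f' (φ w) := h0 ▸ hf w
  have lTensor_L (X) (hX : X ∈ 𝔫) :
      (op.L X).lTensor WQ ((of ℝ opWQ.grading op.grading).symm y) = 0 :=
    lTensor_eq_zero_of_tensorDer_zero_left <| (map_eq_zero_iff _ hinj).1 <|
      (gradedTensorMap_tensorDer _ _ 0 (zero_comm (hφ.map_L X) (by rw [hπ X hX, map_zero]))
        (fun _ => rfl) y).trans (hL X)
  have lTensor_I (X) (hX : X ∈ 𝔫) :
      (op.I X).lTensor WQ ((of ℝ opWQ.grading op.grading).symm y) = 0 :=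
    lTensor_eq_zero_of_tensorDer_zero_left <| (map_eq_zero_iff _ hinj).1 <|
      (gradedTensorMap_tensorDer _ _ (-1) (zero_comm (hφ.map_I X) (by rw [hπ X hX, map_zero]))
        (fun _ => rfl) y).trans (hI X)
  obtain ⟨x, hx⟩ := mem_range_lTensor_of_forall (ψ := ψ.toLinearMap) (S := op.L '' 𝔫 ∪ op.I '' 𝔫)
    (fun a ha => hψrange a (fun X hX => ha _ (.inl ⟨X, hX, rfl⟩))
      fun X hX => ha _ (.inr ⟨X, hX, rfl⟩))
    (by rintro _ (⟨X, hX, rfl⟩ | ⟨X, hX, rfl⟩); exacts [lTensor_L X hX, lTensor_I X hX])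
  refine ⟨of ℝ opWQ.grading opQ.grading x, (of ℝ opW.grading op.grading).symm.injective ?_⟩
  rw [AlgHom.toLinearMap_apply, of_symm_gradedTensorMap]
  refine Eq.trans ?_ (of_symm_gradedTensorMap _ _ y).symm
  rw [← hx, LinearEquiv.symm_apply_apply, LinearMap.lTensor, ← LinearMap.comp_apply,
    ← TensorProduct.map_comp]
  rfl

variable (hφ : IsOperationHom opWQ opW π φ)

theorem gradedTensorMap_mem_tensorIdRange (hψ : IsOperationHom opQ op π ψ)
    (x : opWQ.grading ᵍ⊗[ℝ] opQ.grading) :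
    gradedTensorMap φ ψ hφ.map_mem hψ.map_mem x ∈ hφ.tensorIdRange op := by
  refine ⟨gradedTensorMap (AlgHom.id ℝ WQ) ψ (fun _ _ h => h) hψ.map_mem x, ?_⟩
  induction x using gradedTensor_induction with
  | zero => simp only [map_zero]
  | add x y hx hy => simp only [map_add, hx, hy]
  | tmul _ _ w _ b _ =>
    exact (congrArg _ (gradedTensorMap_tmul _ _ w b)).trans <|
      (gradedTensorMap_tmul _ _ w (ψ b)).trans (gradedTensorMap_tmul _ _ w b).symm

theorem tensorDer_mem_tensorIdRange (k : ℤ) {f : Module.End ℝ WQ} {f' : Module.End ℝ W}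
    (hf : ∀ w, φ (f w) = f' (φ w)) (g : Module.End ℝ A) :
    ∀ x ∈ hφ.tensorIdRange op, tensorDer opW.grading op.grading k f' g x ∈ hφ.tensorIdRange op := by
  rintro _ ⟨y, rfl⟩
  exact ⟨tensorDer opWQ.grading op.grading k f g y,
    gradedTensorMap_tensorDer _ _ k hf (fun _ => rfl) y⟩

theorem includeLeft_mem_tensorIdRange (w : WQ) :
    includeLeft opW.grading op.grading (φ w) ∈ hφ.tensorIdRange op :=
  ⟨includeLeft opWQ.grading op.grading w, gradedTensorMap_tmul _ _ w 1⟩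

theorem includeRight_mem_tensorIdRange (a : A) :
    includeRight opW.grading op.grading a ∈ hφ.tensorIdRange op :=
  ⟨includeRight opWQ.grading op.grading a,
    (gradedTensorMap_tmul _ _ 1 a).trans (congrArg (· ᵍ⊗ₜ[ℝ] a) (map_one φ))⟩

theorem tensorIdRange_sup_adjoin_eq_top {s : Set W} (hs : Algebra.adjoin ℝ s = ⊤) :
    hφ.tensorIdRange op ⊔ Algebra.adjoin ℝ (includeLeft opW.grading op.grading '' s) = ⊤ := by
  have left_mem (w : W) : includeLeft opW.grading op.grading w ∈
      Algebra.adjoin ℝ (includeLeft opW.grading op.grading '' s) := by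
    rw [← AlgHom.map_adjoin, hs]
    exact ⟨w, trivial, rfl⟩
  refine Algebra.eq_top_iff.2 <| gradedTensor_induction (Subalgebra.zero_mem _)
    (fun _ _ => Subalgebra.add_mem _) fun _ _ w _ a _ => ?_
  rw [← tmul_one_mul_one_tmul]
  exact Subalgebra.mul_mem _ (le_sup_right (a := hφ.tensorIdRange op) (left_mem w))
    (le_sup_left (a := hφ.tensorIdRange op) (hφ.includeRight_mem_tensorIdRange a))

end IsOperationHom

end Reduction

namespace WeilData

open GradedTensorProduct

variable {b : Module.Basis ι ℝ 𝔤} (wd : WeilData ι b W) (op : Operation 𝔤 A)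
  {bq : Module.Basis κ ℝ 𝔮} (wdQ : WeilData κ bq WQ)

/-- An equivariant `𝔫`-connection on `A` reduces `W_𝔤 ⊗ A` to the subalgebra `W_𝔮 ⊗ A`. -/
def normalReduction {𝔫 : Submodule ℝ 𝔤} {hn : ∀ Y : 𝔤, ∀ x ∈ 𝔫, ⁅Y, x⁆ ∈ 𝔫} {π : 𝔤 →ₗ⁅ℝ⁆ 𝔮}
    (hπker : ∀ X, π X = 0 ↔ X ∈ 𝔫) {θN : Module.Dual ℝ 𝔫 →ₗ[ℝ] A}
    (hmem : ∀ α, θN α ∈ op.grading 1) (hconn : ∀ (X : 𝔫) α, op.I X (θN α) = α X • (1 : A))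
    (hequiv : ∀ Y α, op.L Y (θN α) = -θN (α ∘ₗ adRes 𝔫 hn Y)) {φ : WQ →ₐ[ℝ] W}
    (hφ : IsOperationHom wdQ.toOperation wd.toOperation π φ)
    (map_conn : ∀ β, φ (wdQ.conn β) = wd.conn (β ∘ₗ π)) :
    NormalReduction (wd.curvatureDerivation.tensor op) 𝔫 hn where
  F := hφ.tensorIdRange op
  d_mem := hφ.tensorDer_mem_tensorIdRange 1 hφ.map_d op.d
  I_mem X := hφ.tensorDer_mem_tensorIdRange (-1) (hφ.map_I X) (op.I X)
  pd_eq_zero X hX := by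
    rintro _ ⟨y, rfl⟩
    refine (gradedTensorMap_tensorDer (𝒜 := wdQ.grading) (ℬ := op.grading) hφ.map_mem
      (fun _ _ h => h) (-2) (f := 0) (g := 0) (fun w => ?_) (fun _ => rfl) y).symm.trans ?_
    · exact (map_zero φ).trans
        (wd.pd_eq_zero_of_isOperationHom wdQ hφ map_conn ((hπker X).2 hX) w).symm
    · rw [tensorDer_zero, LinearMap.zero_apply, map_zero]
  θ_mem γ hγ := by
    obtain ⟨β, rfl⟩ : γ ∈ LinearMap.range (π : 𝔤 →ₗ[ℝ] 𝔮).dualMap := by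
      rw [LinearMap.range_dualMap_eq_dualAnnihilator_ker]
      exact Submodule.dualAnnihilator_anti (fun X hX => (hπker X).1 hX) hγ
    have h := hφ.includeLeft_mem_tensorIdRange (op := op) (wdQ.conn β)
    rwa [map_conn] at h
  sup_adjoin_eq_top := by
    refine Eq.trans ?_ (hφ.tensorIdRange_sup_adjoin_eq_top (op := op) wd.adjoin_generators)
    rw [generators, Set.image_union, ← Set.range_comp, ← Set.range_comp]
    congr 3
    exact congrArg Set.range (funext fun γ => wd.tensor_d_includeLeft op (wd.conn γ))
  τ := (includeRight wd.grading op.grading).toLinearMap ∘ₗ θN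
  τ_mem α := hφ.includeRight_mem_tensorIdRange (θN α)
  τ_mem_grading α := includeRight_mem_totalGrading (hmem α)
  I_τ X α := by
    rw [LinearMap.comp_apply, AlgHom.toLinearMap_apply, wd.tensor_I_includeRight op, hconn,
      map_smul, map_one]
  L_τ Y α := by
    rw [LinearMap.comp_apply, AlgHom.toLinearMap_apply, wd.tensor_L_includeRight op, hequiv,
      map_neg, LinearMap.comp_apply, AlgHom.toLinearMap_apply]

variable {ε : Module.End ℝ W}

theorem DTot_eq_tensor_d (hε : ∀ n, ∀ w ∈ wd.grading n, ε w = sgn n • w) :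
    DTot wd op ε = (wd.toOperation.tensor op).d := by
  rw [DTot, eq_signTwist_of_odd odd_one hε]
  rfl

theorem ker_LTot_inf_ker_ITot_inf_grTensor (hε : ∀ n, ∀ w ∈ wd.grading n, ε w = sgn n • w) (m : ℤ) :
    ((⨅ X : 𝔤, LinearMap.ker (LTot wd op X)) ⊓ (⨅ X : 𝔤, LinearMap.ker (ITot wd op ε X))) ⊓
      grTensor b wd op m = (wd.toOperation.tensor op).basicPart m := by
  have LTot_eq (X) : LTot wd op X = (wd.toOperation.tensor op).L X := by
    rw [LTot, LinearMap.lTensor, ← signTwist_of_even (𝒜 := wd.grading) Even.zero]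
    rfl
  have ITot_eq (X) : ITot wd op ε X = (wd.toOperation.tensor op).I X := by
    rw [ITot, eq_signTwist_of_odd odd_neg_one hε]
    rfl
  simp only [LTot_eq, ITot_eq]
  rfl

end WeilData

/-- Let `E` be a smooth manifold with a smooth action of the compact
connected Lie group `G`, let `N ⊴ G` be a closed normal subgroup acting freely on `E`,
and `Q = G/N`.  Then `WH^*_G(E) ≅ WH^*_Q(E/N)`.

Mathlib has no exterior calculus on manifolds, so the de Rham algebras are encoded by
the structures they carry, which is all that the statement and its proof use: `A` stands
for the `G`-operation `Ω^*(E)`; since `N` acts freely, `E → E/N` is a principal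
`N`-bundle and carries a `G`-invariant principal `N`-connection `θ̃` (hypotheses
`hmem, hconn, hequiv`); and `B` stands for `Ω^*(E/N) ≅ Ω^*(E)_{N,bas}` with its
residual `Q = G/N`-operation structure, the isomorphism being the embedding `ψ` onto
the `N`-basic subalgebra.  Infinitesimally (for `G` compact connected) `𝔫 ⊆ 𝔤` is an
ideal and `𝔮 = 𝔤/𝔫` is presented by a surjection `π` with kernel `𝔫`.  The conclusion
is that the Weil-model equivariant cohomologies `WH^n_G(Ω^*(E))` — the basic cohomology
of `W_G ⊗ Ω^*(E)` — and `WH^n_Q(Ω^*(E/N))` are isomorphic in every degree `n`. -/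
theorem equivariant_cohomology_of_free_quotient
    (b : Module.Basis ι ℝ 𝔤) (op : Operation 𝔤 A)
    (𝔫 : Submodule ℝ 𝔤) (hn : ∀ (Y : 𝔤), ∀ x ∈ 𝔫, ⁅Y, x⁆ ∈ 𝔫)
    (π : 𝔤 →ₗ⁅ℝ⁆ 𝔮) (hπsurj : Function.Surjective π)
    (hπker : ∀ X : 𝔤, π X = 0 ↔ X ∈ 𝔫)
    (bq : Module.Basis κ ℝ 𝔮)
    (θN : Module.Dual ℝ ↥𝔫 →ₗ[ℝ] A)
    (hmem : ∀ α, θN α ∈ op.grading 1)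
    (hconn : ∀ (X : ↥𝔫) (α : Module.Dual ℝ ↥𝔫),
      op.I (X : 𝔤) (θN α) = α X • (1 : A))
    (hequiv : ∀ (Y : 𝔤) (α : Module.Dual ℝ ↥𝔫),
      op.L Y (θN α) = -θN (α ∘ₗ adRes 𝔫 hn Y))
    (opQ : Operation 𝔮 B) (ψ : B →ₐ[ℝ] A)
    (hψinj : Function.Injective ψ)
    (hψrange : LinearMap.range ψ.toLinearMap =
      (⨅ X : ↥𝔫, LinearMap.ker (op.L (X : 𝔤))) ⊓
        (⨅ X : ↥𝔫, LinearMap.ker (op.I (X : 𝔤))))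
    (hψd : ∀ x : B, ψ (opQ.d x) = op.d (ψ x))
    (hψL : ∀ (Y : 𝔤) (x : B), ψ (opQ.L (π Y) x) = op.L Y (ψ x))
    (hψI : ∀ (Y : 𝔤) (x : B), ψ (opQ.I (π Y) x) = op.I Y (ψ x))
    (hψgr : ∀ m : ℤ, opQ.grading m = Submodule.comap ψ.toLinearMap (op.grading m))
    (wdG : WeilData ι b W) (wdQ : WeilData κ bq WQ)
    (εG : Module.End ℝ W) (hεG : ∀ (n : ℤ), ∀ w ∈ wdG.grading n, εG w = sgn n • w)
    (εQ : Module.End ℝ WQ) (hεQ : ∀ (n : ℤ), ∀ w ∈ wdQ.grading n, εQ w = sgn n • w) :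
    ∀ n : ℤ, Nonempty
      ((gradedCoh (DTot wdG op εG)
          (fun m => ((⨅ X : 𝔤, LinearMap.ker (LTot wdG op X)) ⊓
            (⨅ X : 𝔤, LinearMap.ker (ITot wdG op εG X))) ⊓ grTensor b wdG op m) n)
        ≃ₗ[ℝ]
       (gradedCoh (DTot wdQ opQ εQ)
          (fun m => ((⨅ X : 𝔮, LinearMap.ker (LTot wdQ opQ X)) ⊓
            (⨅ X : 𝔮, LinearMap.ker (ITot wdQ opQ εQ X))) ⊓ grTensor bq wdQ opQ m) n)) := by
  intro n
  have := b.finiteDimensional_of_finite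
  obtain ⟨φ, hφ, hφinj, map_conn⟩ := wdG.exists_isOperationHom wdQ π hπsurj
  have hψ : IsOperationHom opQ op π ψ :=
    { map_mem := fun m x hx => Submodule.mem_comap.1 (hψgr m ▸ hx), map_d := hψd, map_I := hψI }
  have mem_range (a : A) (hL : ∀ X ∈ 𝔫, op.L X a = 0) (hI : ∀ X ∈ 𝔫, op.I X a = 0) :
      a ∈ LinearMap.range ψ.toLinearMap := by
    simp only [hψrange, Submodule.mem_inf, Submodule.mem_iInf, LinearMap.mem_ker]
    exact ⟨fun X => hL X X.2, fun X => hI X X.2⟩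
  have hΦ := hφ.tensor hψ
  have hΦinj := gradedTensorMap_injective hφ.map_mem hψ.map_mem hφinj hψinj
  have bijective := (wdG.normalReduction op wdQ hπker hmem hconn hequiv hφ
    map_conn).gradedCohMap_bijective (φ := (gradedTensorMap φ ψ hφ.map_mem hψ.map_mem).toLinearMap)
    hΦinj hΦ.map_d (hφ.gradedTensorMap_mem_tensorIdRange hψ) (fun z hz hzF =>
      hφ.mem_range_tensor_of_mem_bas hψ hφinj (fun X => (hπker X).2) mem_range hz hzF) n
  rw [wdG.DTot_eq_tensor_d op hεG, wdQ.DTot_eq_tensor_d opQ hεQ,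
    funext (wdG.ker_LTot_inf_ker_ITot_inf_grTensor op hεG),
    funext (wdQ.ker_LTot_inf_ker_ITot_inf_grTensor opQ hεQ),
    ← funext (hΦ.comap_basicPart hΦinj hπsurj)]
  exact ⟨(LinearEquiv.ofBijective _ bijective).symm⟩

end
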